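/- arXiv:math/9807165 — 8 statements merged into one kernel-verified Lean document; each statement's English description precedes it below -/
import Mathlib

section
/- Let c ≥ 2 and n ≥ 3·c!/2. For every partition of the edge set of Ī_n (all ordered pairs (i,j) with i ≠ j on vertex set {1, …, n}) into c parts each of which is a Ferrers digraph, there exist two distinct parts F and G forming a crossed pair: there is a row containing edges of both parts (i.e., there exist i, j, j' with (i,j) ∈ E(F) and (i,j') ∈ E(G)) and a column containing edges of both parts (i.e., there exist i₁, i₂, j₀ with (i₁,j₀) ∈ E(F) and (i₂,j₀) ∈ E(G)). -/
/-- A subtree representation of a digraph with edge relation `E` on vertex type `V`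
in a host graph `T` on vertex type `W`: each digraph vertex `v` gets a source set
`src v` and a sink set `snk v`, each inducing a connected (hence nonempty) subgraph
of `T`, such that `E u v` holds iff `src u` meets `snk v`. -/
structure SubtreeRep {V W : Type} (E : V → V → Prop) (T : SimpleGraph W) where
  src : V → Set W
  snk : V → Set W
  src_connected : ∀ v, (T.induce (src v)).Connected
  snk_connected : ∀ v, (T.induce (snk v)).Connected
  rep : ∀ u v, E u v ↔ (src u ∩ snk v).Nonempty

/-- The set of leaves (vertices of degree 1) of a graph. -/
def treeLeaves {W : Type} (T : SimpleGraph W) : Set W :=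
  {w | (T.neighborSet w).ncard = 1}

/-- The leafage of a digraph: the minimum number of leaves of a finite host tree in
which the digraph has a subtree representation. -/
noncomputable def digLeafage {V : Type} (E : V → V → Prop) : ℕ :=
  sInf {k | ∃ (W : Type) (_ : Fintype W) (T : SimpleGraph W),
    T.IsTree ∧ Nonempty (SubtreeRep E T) ∧ (treeLeaves T).ncard = k}

/-- The catch leafage of a digraph: the minimum number of leaves of a finite host tree
in which the digraph has a subtree representation all of whose sink sets are single
vertices. -/
noncomputable def catchLeafage {V : Type} (E : V → V → Prop) : ℕ :=
  sInf {k | ∃ (W : Type) (_ : Fintype W) (T : SimpleGraph W) (R : SubtreeRep E T),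
    T.IsTree ∧ (∀ v, ∃ x, R.snk v = {x}) ∧ (treeLeaves T).ncard = k}

/-- `C` is between `A` and `B` in `T`: `A` and `B` are disjoint and the unique path of
`T` from `A` to `B` (i.e. the path meeting `A` only at its first vertex and `B` only
at its last vertex) contains a vertex of `C` (possibly an endpoint). -/
def Between {W : Type} (T : SimpleGraph W) (A B C : Set W) : Prop :=
  A ∩ B = ∅ ∧ ∃ (a b : W) (p : T.Walk a b), a ∈ A ∧ b ∈ B ∧ p.IsPath ∧
    (∀ x ∈ p.support, x ∈ A → x = a) ∧ (∀ x ∈ p.support, x ∈ B → x = b) ∧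
    ∃ x ∈ C, x ∈ p.support

/-- An asteroidal collection of sets in `T`: pairwise disjoint, and no member is
between two other members. -/
def Asteroidal {W ι : Type} (T : SimpleGraph W) (F : ι → Set W) : Prop :=
  (∀ i j, i ≠ j → F i ∩ F j = ∅) ∧
  ∀ i j k, i ≠ j → i ≠ k → j ≠ k → ¬ Between T (F i) (F j) (F k)

/-- The star `K_{1,n}`: the center `none` is adjacent to the `n` leaves `some i`. -/
def starGraph (n : ℕ) : SimpleGraph (Option (Fin n)) :=
  SimpleGraph.fromRel (fun a _ => a = none)

/-- A Ferrers digraph: the successor sets are linearly ordered by inclusion. -/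
def IsFerrers {V : Type} (F : V → V → Prop) : Prop :=
  ∀ u u' : V, {v | F u v} ⊆ {v | F u' v} ∨ {v | F u' v} ⊆ {v | F u v}

/-- The Ferrers dimension `f(D)`: the minimum number of Ferrers digraphs whose
intersection is `E`. -/
noncomputable def ferrersDim {V : Type} (E : V → V → Prop) : ℕ :=
  sInf {k | ∃ F : Fin k → V → V → Prop,
    (∀ i, IsFerrers (F i)) ∧ (∀ u v, E u v ↔ ∀ i, F i u v)}

/-- `f*(D)`: the minimum number of pairwise edge-disjoint Ferrers digraphs whose
union is the complement of `E` in `V × V`. -/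
noncomputable def fstar {V : Type} (E : V → V → Prop) : ℕ :=
  sInf {k | ∃ F : Fin k → V → V → Prop,
    (∀ i, IsFerrers (F i)) ∧
    (∀ i j, i ≠ j → ∀ u v, ¬ (F i u v ∧ F j u v)) ∧
    (∀ u v, ¬ E u v ↔ ∃ i, F i u v)}

/-- The width of the incidence poset `P(D)`: the maximum size of an antichain (under
inclusion) of predecessor sets of the digraph `E`. -/
noncomputable def incWidth {V : Type} (E : V → V → Prop) : ℕ :=
  sSup {k | ∃ A : Finset (Set V),
    (↑A : Set (Set V)) ⊆ Set.range (fun v => {u | E u v}) ∧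
    IsAntichain (· ⊆ ·) (↑A : Set (Set V)) ∧ A.card = k}

/-- The digraph `D_n` with adjacency matrix `J - I`: all pairs of distinct vertices. -/
def DnRel (n : ℕ) (i j : Fin n) : Prop := i ≠ j

/-- The digraph `E_n` with adjacency matrix `[[I, Y], [Yᵀ, 0]]` (vertex `n-1` playing
the role of the last row/column). -/
def EnRel (n : ℕ) (i j : Fin n) : Prop :=
  (i.val < n - 1 ∧ j.val < n - 1 ∧ i = j) ∨
  (i.val < n - 1 ∧ j.val = n - 1) ∨
  (i.val = n - 1 ∧ j.val < n - 1)

/-- The digraph `C_n`: a directed `n`-cycle plus a loop at each vertex. -/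
def CnRel (n : ℕ) (i j : Fin n) : Prop := j = i ∨ j.val = (i.val + 1) % n

/-- The digraph `M_{k,m}` on `Fin k × Fin m`: identity diagonal blocks, all-ones
blocks above the diagonal, all-zeros blocks below. -/
def MkmRel (k m : ℕ) (p q : Fin k × Fin m) : Prop :=
  p.1 < q.1 ∨ (p.1 = q.1 ∧ p.2 = q.2)

/-- The digraph `F_n` with adjacency matrix `[[I, Y], [Yᵀ, 1]]` (vertex `n-1` playing
the role of the last row/column). -/
def FnRel (n : ℕ) (i j : Fin n) : Prop := i = j ∨ i.val = n - 1 ∨ j.val = n - 1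

/-- The digraph `P_n`: a directed path `1 → 2 → ⋯ → n` plus a loop at each vertex. -/
def PnRel (n : ℕ) (i j : Fin n) : Prop := j = i ∨ j.val = i.val + 1

/-- An irreflexive Ferrers digraph has no 2-cycle. -/
theorem IsFerrers.asymm {V : Type} {F : V → V → Prop} (hF : IsFerrers F)
    (hirr : ∀ v, ¬ F v v) {i j : V} (hij : F i j) : ¬ F j i := by
  intro hji
  rcases hF i j with h | h
  · exact hirr j (h hij)
  · exact hirr i (h hji)

/-- The off-diagonal all-ones matrix of order `m ≠ 1` does not factor through dimension
less than `m`. -/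
theorem card_le_of_sum_mul_eq_ite {S ι : Type} [Fintype S] [DecidableEq S] [Fintype ι]
    (hS : Fintype.card S ≠ 1) (U : S → ι → ℚ) (W : ι → S → ℚ)
    (hUW : ∀ i j, ∑ a, U i a * W a j = if i = j then 0 else 1) :
    Fintype.card S ≤ Fintype.card ι := by
  by_contra! hlt
  obtain ⟨v, hv, hv0⟩ := Submodule.exists_mem_ne_zero_of_ne_bot
    (LinearMap.ker_ne_bot_of_finrank_lt (f := (Matrix.of W).mulVecLin) (by simpa using hlt))
  have hv' : ∀ a, ∑ j, W a j * v j = 0 := fun a => congrFun (LinearMap.mem_ker.1 hv) a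
  have hconst : ∀ i, v i = ∑ j, v j := by
    intro i
    have h : ∑ j, (∑ a, U i a * W a j) * v j = 0 := by
      calc ∑ j, (∑ a, U i a * W a j) * v j = ∑ a, U i a * ∑ j, W a j * v j := by
            simp only [Finset.sum_mul, Finset.mul_sum, mul_assoc]
            exact Finset.sum_comm
        _ = 0 := by simp [hv']
    have h' : ∑ j, (v j - if i = j then v j else 0) = 0 := by
      refine Eq.trans ?_ h
      refine Finset.sum_congr rfl fun j _ => ?_
      rw [hUW]
      split_ifs <;> simp
    rw [Finset.sum_sub_distrib, Finset.sum_ite_eq] at h'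
    simp only [Finset.mem_univ, if_true] at h'
    linarith
  have hsum : ∑ j, v j = Fintype.card S * ∑ j, v j := by
    conv_lhs => rw [Finset.sum_congr rfl fun i _ => hconst i]
    simp
  have hcard : (Fintype.card S : ℚ) - 1 ≠ 0 := sub_ne_zero.2 (by exact_mod_cast hS)
  have hzero : ∑ j, v j = 0 := by
    refine (mul_eq_zero.1 ?_).resolve_left hcard
    linarith
  exact hv0 (funext fun i => (hconst i).trans hzero)

/-- If the off-diagonal pairs are partitioned into asymmetric parts, no two of which share
both a row and a column, then there are at most twice as many vertices as parts. -/
theorem card_le_two_mul_of_no_crossed_pair {V ι : Type} [Fintype V] [Fintype ι]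
    (hι : 2 ≤ Fintype.card ι) (F : ι → V → V → Prop)
    (hasymm : ∀ a i j, F a i j → ¬ F a j i)
    (hcover : ∀ i j, i ≠ j → ∃ a, F a i j)
    (hcross : ∀ a b i j, (∃ k, F a i k) → (∃ k, F b i k) → (∃ k, F a k j) →
      (∃ k, F b k j) → a = b) :
    Fintype.card V ≤ 2 * Fintype.card ι := by
  classical
  have hrect : ∀ a i j, i ≠ j → (∃ k, F a i k) → (∃ k, F a k j) → F a i j := by
    intro a i j hij hr hc
    obtain ⟨b, hb⟩ := hcover i j hij
    rwa [hcross a b i j hr ⟨j, hb⟩ hc ⟨i, hb⟩]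
  let P : V → Prop := fun i => ∃ a, (∃ k, F a i k) ∧ ∃ k, F a k i
  have hP : Fintype.card {i // P i} ≤ Fintype.card ι := by
    choose f hfr hfc using fun i : {i // P i} => i.2
    refine Fintype.card_le_of_injective f fun i j hij => ?_
    by_contra hne
    have hne' : i.1 ≠ j.1 := fun h => hne (Subtype.ext h)
    exact hasymm _ _ _ (hrect (f i) i j hne' (hfr i) (hij ▸ hfc j))
      (hrect (f i) j i hne'.symm (hij ▸ hfr j) (hfc i))
  have hnP : Fintype.card {i // ¬ P i} ≤ Fintype.card ι := by
    by_cases h1 : Fintype.card {i // ¬ P i} = 1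
    · omega
    refine card_le_of_sum_mul_eq_ite h1
      (fun i a => if ∃ k, F a i k then 1 else 0) (fun a j => if ∃ k, F a k j then 1 else 0) ?_
    intro i j
    simp only [ite_zero_mul_ite_zero, mul_one]
    split_ifs with hij
    · subst hij
      exact Finset.sum_eq_zero fun a _ => if_neg fun h => i.2 ⟨a, h⟩
    · obtain ⟨a, ha⟩ := hcover i j fun h => hij (Subtype.ext h)
      rw [Finset.sum_eq_single a]
      · exact if_pos ⟨⟨_, ha⟩, ⟨_, ha⟩⟩
      · exact fun b _ hb => if_neg fun h => hb (hcross b a i j h.1 ⟨_, ha⟩ h.2 ⟨_, ha⟩)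
      · exact fun h => absurd (Finset.mem_univ a) h
  have := Fintype.card_subtype_compl P
  have := Fintype.card_subtype_le P
  omega

/-- Two asymmetric parts covering all off-diagonal pairs on at least three vertices share
both a row and a column. -/
theorem not_no_crossed_pair_two {V : Type} (F : Fin 2 → V → V → Prop)
    (hasymm : ∀ a i j, F a i j → ¬ F a j i)
    (hcover : ∀ i j, i ≠ j → ∃ a, F a i j)
    {x y z : V} (hxy : x ≠ y) (hxz : x ≠ z) (hyz : y ≠ z) :
    ¬ ∀ a b i j, (∃ k, F a i k) → (∃ k, F b i k) → (∃ k, F a k j) →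
      (∃ k, F b k j) → a = b := by
  intro hcross
  have hrev : ∀ a b i j, a ≠ b → i ≠ j → F a i j → F b j i := by
    intro a b i j hab hij h
    obtain ⟨d, hd⟩ := hcover j i hij.symm
    have hda : d ≠ a := fun e => hasymm a i j h (e ▸ hd)
    obtain rfl : d = b := by omega
    exact hd
  have hrow : ∀ a i j k, i ≠ j → i ≠ k → F a i j → F a i k := by
    intro a i j k hij hik h
    obtain ⟨b, hb⟩ := hcover i k hik
    by_cases hab : a = b
    · rwa [hab]
    · exact absurd (hcross a b i i ⟨_, h⟩ ⟨_, hb⟩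
        ⟨_, hrev b a i k (Ne.symm hab) hik hb⟩ ⟨_, hrev a b i j hab hij h⟩) hab
  obtain ⟨a, ha⟩ := hcover x y hxy
  obtain ⟨b, hab⟩ := exists_ne a
  have hyx := hrev a b x y hab.symm hxy ha
  have hzx := hrev a b x z hab.symm hxz (hrow a x y z hxy hxz ha)
  exact hasymm b y z (hrow b y x z hxy.symm hyz hyx) (hrow b z x y hxz.symm hyz.symm hzx)

/-- For `c ≥ 2` and `n ≥ 3·c!/2`, every partition of the complement of
the identity digraph on `n` vertices into `c` Ferrers digraphs has a crossed pair of
parts: two parts that appear together in some row and together in some column. -/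
theorem stmt_9 (c n : ℕ) (hc : 2 ≤ c) (hn : 3 * Nat.factorial c / 2 ≤ n)
    (F : Fin c → Fin n → Fin n → Prop)
    (hferrers : ∀ a, IsFerrers (F a))
    (hdisj : ∀ a b, a ≠ b → ∀ i j, ¬ (F a i j ∧ F b i j))
    (hcover : ∀ i j : Fin n, i ≠ j ↔ ∃ a, F a i j) :
    ∃ a b : Fin c, a ≠ b ∧
      (∃ i j j' : Fin n, F a i j ∧ F b i j') ∧
      (∃ i i' j₀ : Fin n, F a i j₀ ∧ F b i' j₀) := by
  by_contra hno
  have hcross : ∀ a b i j, (∃ k, F a i k) → (∃ k, F b i k) → (∃ k, F a k j) →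
      (∃ k, F b k j) → a = b := by
    rintro a b i j ⟨k₁, h₁⟩ ⟨k₂, h₂⟩ ⟨k₃, h₃⟩ ⟨k₄, h₄⟩
    by_contra hab
    exact hno ⟨a, b, hab, ⟨i, k₁, k₂, h₁, h₂⟩, ⟨k₃, k₄, j, h₃, h₄⟩⟩
  have hasymm : ∀ a i j, F a i j → ¬ F a j i := fun a i j h =>
    (hferrers a).asymm (fun v hv => (hcover v v).2 ⟨a, hv⟩ rfl) h
  have hcov : ∀ i j, i ≠ j → ∃ a, F a i j := fun i j => (hcover i j).1
  obtain rfl | hc3 : c = 2 ∨ 3 ≤ c := by omega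
  · have hn3 : 3 ≤ n := by simpa using hn
    exact not_no_crossed_pair_two F hasymm hcov
      (x := ⟨0, by omega⟩) (y := ⟨1, by omega⟩) (z := ⟨2, by omega⟩)
      (by simp) (by simp) (by simp) hcross
  · have hle : n ≤ 2 * c := by
      simpa using card_le_two_mul_of_no_crossed_pair (by simpa using hc) F hasymm hcov hcross
    have hfac : 2 * c ≤ c.factorial := by
      obtain ⟨k, rfl⟩ : ∃ k, c = k + 1 := ⟨c - 1, by omega⟩
      have h2 : 2 ≤ k.factorial := Nat.factorial_le (m := 2) (by omega)
      rw [Nat.factorial_succ, mul_comm]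
      exact Nat.mul_le_mul_left _ h2
    omega
end

section
/- Let c ≥ 2, k ≥ 1 + C(c,2) (where C(c,2) = c(c−1)/2), and m ≥ 3·c!/2. Then f*(M_{k,m}) > c, where M_{k,m} is the digraph on km vertices indexed by pairs (r,i) with 1 ≤ r ≤ k and 1 ≤ i ≤ m, with ((r,i),(s,j)) ∈ E(M_{k,m}) iff r < s, or r = s and i = j (block adjacency matrix with identity diagonal blocks, all-1 blocks above the diagonal, and all-0 blocks below the diagonal). -/
/-- If the ordered pairs of distinct elements of `S` are covered by the asymmetric relations
`R α`, `α ∈ C`, and `S` is large compared with `C.card!`, then two of the relations share a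
vertex with successors in both and share a vertex with predecessors in both. -/
theorem exists_pair_common_out_in {K V : Type*} [DecidableEq K] (R : K → V → V → Prop)
    (hR : ∀ α u v, R α u v → ¬ R α v u) (n : ℕ) (C : Finset K) (S : Finset V)
    (hC : C.card = n) (hS : 2 ≤ S.card) (hn : 3 * n.factorial ≤ 2 * S.card + 1)
    (hcov : ∀ u ∈ S, ∀ v ∈ S, u ≠ v → ∃ α ∈ C, R α u v) :
    ∃ P ⊆ C, P.card = 2 ∧ ∃ x y, ∀ α ∈ P, (∃ u, R α x u) ∧ ∃ u, R α u y := by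
  induction n generalizing C S with
  | zero =>
    obtain ⟨u, hu, v, hv, huv⟩ := Finset.one_lt_card.1 hS
    obtain ⟨α, hα, -⟩ := hcov u hu v hv huv
    simp [Finset.card_eq_zero.1 hC] at hα
  | succ n ih =>
    rcases Nat.eq_zero_or_pos n with rfl | hpos
    · obtain ⟨u, hu, v, hv, huv⟩ := Finset.one_lt_card.1 hS
      obtain ⟨γ, rfl⟩ := Finset.card_eq_one.1 hC
      obtain ⟨α, hα, h⟩ := hcov u hu v hv huv
      obtain ⟨β, hβ, hvu⟩ := hcov v hv u hu huv.symm
      rw [Finset.mem_singleton] at hα hβ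
      subst hα hβ
      exact absurd hvu (hR _ _ _ h)
    -- The fibres of `g` avoid a colour, and one of them is large enough to recurse on.
    have key (g : V → K) (hgC : ∀ x ∈ S, g x ∈ C)
        (hg : ∀ u ∈ S, ∀ v ∈ S, g u = g v → ¬ R (g u) u v) :
        ∃ P ⊆ C, P.card = 2 ∧ ∃ x y, ∀ α ∈ P, (∃ u, R α x u) ∧ ∃ u, R α u y := by
      obtain ⟨γ, hγ, hmax⟩ := C.exists_max_image (fun γ => (S.filter (g · = γ)).card)
        (Finset.card_pos.1 (by omega))
      have hle := Finset.card_le_mul_card_image_of_maps_to hgC _ hmax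
      set T := S.filter (g · = γ)
      rw [hC] at hle
      rw [Nat.factorial_succ] at hn
      have hfac : 1 ≤ n.factorial := n.factorial_pos
      have hT : 2 ≤ T.card := by
        by_contra! h
        nlinarith
      obtain ⟨P, hP, h⟩ := ih (C.erase γ) T (by rw [Finset.card_erase_of_mem hγ, hC]; rfl) hT
        (by
          have : (n + 1) * (3 * n.factorial) ≤ (n + 1) * (2 * T.card + 1) := by nlinarith
          exact Nat.le_of_mul_le_mul_left this n.succ_pos)
        (by
          intro u hu v hv huv
          obtain ⟨huS, hgu⟩ := Finset.mem_filter.1 hu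
          obtain ⟨hvS, hgv⟩ := Finset.mem_filter.1 hv
          obtain ⟨α, hα, h⟩ := hcov u huS v hvS huv
          refine ⟨α, Finset.mem_erase.2 ⟨?_, hα⟩, h⟩
          rintro rfl
          exact hg u huS v hvS (hgu.trans hgv.symm) (hgu ▸ h))
      exact ⟨P, hP.trans (Finset.erase_subset _ _), h⟩
    by_cases hout : ∃ x ∈ S, ∀ α ∈ C, ∃ u, R α x u
    · by_cases hin : ∃ y ∈ S, ∀ α ∈ C, ∃ u, R α u y
      · obtain ⟨x, -, hx⟩ := hout
        obtain ⟨y, -, hy⟩ := hin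
        obtain ⟨P, hP, hP2⟩ := Finset.exists_subset_card_eq (show 2 ≤ C.card by omega)
        exact ⟨P, hP, hP2, x, y, fun α hα => ⟨hx α (hP hα), hy α (hP hα)⟩⟩
      · push Not at hin
        obtain ⟨y, hy⟩ := Finset.card_pos.1 (show 0 < S.card by omega)
        have : Nonempty K := ⟨(hin y hy).choose⟩
        choose! g hgC hg using hin
        exact key g hgC fun u _ v hv huv h => hg v hv u (huv ▸ h)
    · push Not at hout
      obtain ⟨x, hx⟩ := Finset.card_pos.1 (show 0 < S.card by omega)
      have : Nonempty K := ⟨(hout x hx).choose⟩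
      choose! g hgC hg using hout
      exact key g hgC fun u hu v _ _ h => hg u hu v h

/-- A Ferrers digraph containing `(u, v)` and `(w, z)` contains `(u, z)` or `(w, v)`. -/
theorem IsFerrers.cross {V : Type} {F : V → V → Prop} (hF : IsFerrers F) {u v w z : V}
    (huv : F u v) (hwz : F w z) : F u z ∨ F w v :=
  (hF u w).elim (fun hs => .inr (hs huv)) fun hs => .inl (hs hwz)

/-- On a finite vertex set the minimum defining `fstar` is attained. -/
theorem exists_ferrers_partition {V : Type} [Finite V] (E : V → V → Prop) :
    ∃ F : Fin (fstar E) → V → V → Prop,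
      (∀ i, IsFerrers (F i)) ∧
      (∀ i j, i ≠ j → ∀ u v, ¬ (F i u v ∧ F j u v)) ∧
      (∀ u v, ¬ E u v ↔ ∃ i, F i u v) := by
  obtain ⟨N, ⟨e⟩⟩ := Finite.exists_equiv_fin (V × V)
  refine Nat.sInf_mem (s := {k | ∃ F : Fin k → V → V → Prop,
    (∀ i, IsFerrers (F i)) ∧
    (∀ i j, i ≠ j → ∀ u v, ¬ (F i u v ∧ F j u v)) ∧
    (∀ u v, ¬ E u v ↔ ∃ i, F i u v)})
    ⟨N, fun i u v => ¬ E u v ∧ e (u, v) = i, fun i u u' => ?_, ?_, ?_⟩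
  · by_cases h : ∃ v, e (u, v) = i
    · obtain ⟨v, rfl⟩ := h
      refine .inr ?_
      rintro w ⟨hE, hw⟩
      obtain ⟨rfl, rfl⟩ := Prod.mk.inj (e.injective hw)
      exact ⟨hE, rfl⟩
    · exact .inl fun w hw => absurd ⟨w, hw.2⟩ h
  · rintro i j hij u v ⟨⟨-, hi⟩, -, hj⟩
    exact hij (hi.symm.trans hj)
  · simp

/-- For `c ≥ 2`, `k ≥ 1 + C(c,2)`, and `m ≥ 3·c!/2`, the digraph
`M_{k,m}` satisfies `f*(M_{k,m}) > c`. -/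
theorem stmt_10 (c k m : ℕ) (hc : 2 ≤ c) (hk : 1 + c.choose 2 ≤ k)
    (hm : 3 * Nat.factorial c / 2 ≤ m) :
    c < fstar (MkmRel k m) := by
  by_contra! hle
  obtain ⟨F, hF, hdisj, hcov⟩ := exists_ferrers_partition (MkmRel k m)
  generalize fstar (MkmRel k m) = d at F hF hdisj hcov hle
  have hfac : 3 * d.factorial ≤ 2 * m + 1 := by
    have := Nat.factorial_le hle
    omega
  have hm2 : 2 ≤ m := by
    have := Nat.factorial_le hc
    rw [Nat.factorial_two] at this
    omega
  have hblock (r : Fin k) := exists_pair_common_out_in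
    (fun α (i j : Fin m) => F α (r, i) (r, j))
    (fun α i j h h' => by
      have hdiag (l : Fin m) : ¬ F α (r, l) (r, l) := fun hl =>
        (hcov _ _).2 ⟨α, hl⟩ (.inr ⟨rfl, rfl⟩)
      exact ((hF α).cross h h').elim (hdiag i) (hdiag j))
    d Finset.univ Finset.univ (by simp) (by simpa using hm2) (by simpa using hfac)
    (fun i _ j _ hij => by
      obtain ⟨α, h⟩ := (hcov (r, i) (r, j)).1 (by simp [MkmRel, hij])
      exact ⟨α, Finset.mem_univ _, h⟩)
  choose P _ hP2 x y hxy using hblock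
  obtain ⟨r, -, s, -, hrs, hPrs⟩ := Finset.exists_ne_map_eq_of_card_lt_of_maps_to
    (s := Finset.univ) (t := Finset.powersetCard 2 (Finset.univ : Finset (Fin d))) (f := P)
    (by
      have := Nat.choose_le_choose 2 hle
      simp only [Finset.card_powersetCard, Finset.card_univ, Fintype.card_fin]
      omega)
    (fun r _ => by simp [hP2 r])
  wlog hlt : s < r generalizing r s
  · exact this s r hrs.symm hPrs.symm (lt_of_le_of_ne (not_lt.1 hlt) hrs)
  have hmem (α) (hα : α ∈ P r) : F α (r, x r) (s, y s) := by
    obtain ⟨u, hu⟩ := (hxy r α hα).1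
    obtain ⟨v, hv⟩ := (hxy s α (hPrs ▸ hα)).2
    exact ((hF α).cross hu hv).resolve_right fun h => (hcov _ _).2 ⟨α, h⟩ (.inl hlt)
  obtain ⟨α, hα, β, hβ, hαβ⟩ := Finset.one_lt_card.1 (show 1 < (P r).card by rw [hP2]; decide)
  exact hdisj α β hαβ _ _ ⟨hmem α hα, hmem β hβ⟩
end

section
/- For all k ≥ 1 and m ≥ 2, the digraph M_{k,m} has Ferrers dimension f(M_{k,m}) = 2, where M_{k,m} is the digraph on km vertices indexed by pairs (r,i) with 1 ≤ r ≤ k and 1 ≤ i ≤ m, with ((r,i),(s,j)) ∈ E(M_{k,m}) iff r < s, or r = s and i = j (block adjacency matrix with identity diagonal blocks, all-1 blocks above the diagonal, and all-0 blocks below the diagonal). -/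
/-- A relation of the form `f u ≤ g v` into a linear order is Ferrers. -/
lemma isFerrers_of_le {V α : Type} [LinearOrder α] (f g : V → α) :
    IsFerrers (fun u v => f u ≤ g v) := by
  intro u u'
  rcases le_total (f u) (f u') with h | h
  · exact Or.inr fun _ hv => h.trans hv
  · exact Or.inl fun _ hv => h.trans hv

/-- `M_{k,m}` is the intersection of the lexicographic order and the lexicographic order
with the second coordinate reversed. -/
lemma mkmRel_iff_toLex_le {k m : ℕ} (p q : Fin k × Fin m) :
    MkmRel k m p q ↔ toLex p ≤ toLex q ∧
      toLex (p.1, OrderDual.toDual p.2) ≤ toLex (q.1, OrderDual.toDual q.2) := by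
  simp only [MkmRel, Prod.Lex.toLex_le_toLex, OrderDual.toDual_le_toDual]
  grind

/-- `M_{k,m}` is not Ferrers when it has a diagonal block of size at least two. -/
lemma not_isFerrers_mkmRel {k m : ℕ} (hk : 1 ≤ k) (hm : 2 ≤ m) :
    ¬ IsFerrers (MkmRel k m) := by
  intro h
  have key := h (⟨0, hk⟩, ⟨0, by omega⟩) (⟨0, hk⟩, ⟨1, hm⟩)
  rcases key with h | h
  · simpa [MkmRel] using h (Or.inr ⟨rfl, rfl⟩)
  · simpa [MkmRel] using h (Or.inr ⟨rfl, rfl⟩)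

/-- For `k ≥ 1` and `m ≥ 2`, the digraph `M_{k,m}` has Ferrers
dimension exactly 2. -/
theorem stmt_11 (k m : ℕ) (hk : 1 ≤ k) (hm : 2 ≤ m) :
    ferrersDim (MkmRel k m) = 2 := by
  have mkmRel_mem : ∃ F : Fin 2 → Fin k × Fin m → Fin k × Fin m → Prop,
      (∀ i, IsFerrers (F i)) ∧ ∀ u v, MkmRel k m u v ↔ ∀ i, F i u v := by
    refine ⟨![fun p q => toLex p ≤ toLex q,
      fun p q => toLex (p.1, OrderDual.toDual p.2) ≤ toLex (q.1, OrderDual.toDual q.2)],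
      ?_, fun u v => by simp [mkmRel_iff_toLex_le, Fin.forall_fin_two]⟩
    rw [Fin.forall_fin_two]
    exact ⟨isFerrers_of_le _ _, isFerrers_of_le _ _⟩
  refine le_antisymm (Nat.sInf_le ?_) (le_csInf ?_ ?_)
  · exact mkmRel_mem
  · exact ⟨2, mkmRel_mem⟩
  · rintro n ⟨F, hF, hE⟩
    by_contra! hn
    apply not_isFerrers_mkmRel hk hm
    interval_cases n
    · intro u u'
      simp [hE]
    · have hEF : MkmRel k m = F 0 := by
        ext u v
        simp [hE]
      exact hEF ▸ hF 0
end

section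
/- Let c ≥ 2 and 1 ≤ k ≤ C(c,2) (where C(c,2) = c(c−1)/2). Then for every m ≥ 1, f*(M_{k,m}) ≤ c, where M_{k,m} is the digraph on km vertices indexed by pairs (r,i) with 1 ≤ r ≤ k and 1 ≤ i ≤ m, with ((r,i),(s,j)) ∈ E(M_{k,m}) iff r < s, or r = s and i = j (block adjacency matrix with identity diagonal blocks, all-1 blocks above the diagonal, and all-0 blocks below the diagonal). -/
/-- Every natural number is of the form `y.choose 2 + x` with `x < y`: it is the rank of the
pair `{x, y}` in the colexicographic order on two-element sets. -/
theorem exists_eq_choose_two_add (r : ℕ) : ∃ x y : ℕ, x < y ∧ r = y.choose 2 + x := by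
  induction r with
  | zero => exact ⟨0, 1, by simp⟩
  | succ r ih =>
    obtain ⟨x, y, hxy, rfl⟩ := ih
    rcases Nat.lt_or_ge (x + 1) y with h | h
    · exact ⟨x + 1, y, h, by omega⟩
    · refine ⟨0, y + 1, by omega, ?_⟩
      rw [Nat.choose_succ_succ' y 1, Nat.choose_one_right, one_add_one_eq_two]
      omega

/-- The larger element of a pair is monotone in its colexicographic rank. -/
theorem le_of_choose_two_add_le {x y x' y' : ℕ} (hx' : x' < y')
    (h : y.choose 2 + x ≤ y'.choose 2 + x') : y ≤ y' := by
  by_contra! hlt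
  have hmono : (y' + 1).choose 2 ≤ y.choose 2 := Nat.choose_le_choose 2 hlt
  rw [Nat.choose_succ_succ' y' 1, Nat.choose_one_right, one_add_one_eq_two] at hmono
  omega

/-- The part of the complement of `M_{k,m}` coloured `i`, when block `r` is labelled by the pair
of colours `x r < y r`. A diagonal block has colour `x r` above the diagonal and `y r` below it;
a block `(r, s)` with `s < r` has colour `y r` if `y s = y r`, and `x r` otherwise. -/
def colourPart {k m : ℕ} (x y : Fin k → ℕ) (i : ℕ) (u v : Fin k × Fin m) : Prop :=
  (y v.1 < y u.1 ∧ x u.1 = i) ∨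
  (v.1 < u.1 ∧ y v.1 = y u.1 ∧ y u.1 = i) ∨
  (v.1 = u.1 ∧ u.2 < v.2 ∧ x u.1 = i) ∨
  (v.1 = u.1 ∧ v.2 < u.2 ∧ y u.1 = i)

theorem isFerrers_colourPart {k m : ℕ} {x y : Fin k → ℕ} (hxy : ∀ r, x r < y r)
    (hinj : ∀ r s, x r = x s → y r = y s → r = s) (i : ℕ) :
    IsFerrers (colourPart (m := m) x y i) := by
  intro u u'
  by_contra! h
  obtain ⟨h₁, h₂⟩ := h
  obtain ⟨v, hv, hv'⟩ := Set.not_subset.mp h₁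
  obtain ⟨w, hw, hw'⟩ := Set.not_subset.mp h₂
  obtain ⟨r, p⟩ := u
  obtain ⟨r', p'⟩ := u'
  obtain ⟨s, q⟩ := v
  obtain ⟨s', q'⟩ := w
  have := hxy r
  have := hxy r'
  have := hinj r r'
  simp only [Set.mem_ofPred_eq, colourPart] at hv hv' hw hw'
  clear h₁ h₂ hxy hinj
  rcases hv with hv | hv | hv | hv <;> rcases hw with hw | hw | hw | hw <;> grind

theorem colourPart_unique {k m : ℕ} {x y : Fin k → ℕ} (hxy : ∀ r, x r < y r)
    {i j : ℕ} {u v : Fin k × Fin m}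
    (hi : colourPart x y i u v) (hj : colourPart x y j u v) : i = j := by
  have := hxy u.1
  simp only [colourPart] at hi hj
  grind

theorem not_mkmRel_iff_colourPart {k m : ℕ} {x y : Fin k → ℕ} (hmono : Monotone y)
    (u v : Fin k × Fin m) :
    ¬ MkmRel k m u v ↔ colourPart x y (x u.1) u v ∨ colourPart x y (y u.1) u v := by
  obtain ⟨r, p⟩ := u
  obtain ⟨s, q⟩ := v
  have h₁ := @hmono r s
  have h₂ := @hmono s r
  simp only [MkmRel, colourPart]
  grind

/-- For `c ≥ 2` and `1 ≤ k ≤ C(c,2)`, for every `m ≥ 1` we have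
`f*(M_{k,m}) ≤ c`. -/
theorem stmt_12 (c k m : ℕ) (hc : 2 ≤ c) (hk1 : 1 ≤ k) (hk2 : k ≤ c.choose 2)
    (hm : 1 ≤ m) :
    fstar (MkmRel k m) ≤ c := by
  choose x y hxy hrank using exists_eq_choose_two_add
  have hyc (r : Fin k) : y r < c := by
    by_contra! h
    have := Nat.choose_le_choose 2 h
    have := hrank r
    omega
  have hmono : Monotone fun r : Fin k => y r := by
    intro r s hrs
    refine le_of_choose_two_add_le (x := x r) (hxy s) ?_
    rw [← hrank, ← hrank]
    exact hrs
  have hinj (r s : Fin k) (h₁ : x r = x s) (h₂ : y r = y s) : r = s := by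
    apply Fin.ext
    rw [hrank r, hrank s, h₁, h₂]
  refine Nat.sInf_le ⟨fun i => colourPart (fun r : Fin k => x r) (fun r : Fin k => y r) i,
    fun i => isFerrers_colourPart (fun r => hxy r) hinj i, ?_, fun u v => ?_⟩
  · rintro i j hij u v ⟨hi, hj⟩
    exact hij (Fin.ext (colourPart_unique (fun r => hxy r) hi hj))
  · rw [not_mkmRel_iff_colourPart (x := fun r : Fin k => x r) hmono]
    constructor
    · rintro (h | h)
      · exact ⟨⟨x u.1, (hxy _).trans (hyc _)⟩, h⟩
      · exact ⟨⟨y u.1, hyc _⟩, h⟩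
    · rintro ⟨i, h⟩
      have hi : x u.1 = i ∨ y u.1 = i := by
        simp only [colourPart] at h
        tauto
      rcases hi with hi | hi
      · exact Or.inl (by simpa only [hi] using h)
      · exact Or.inr (by simpa only [hi] using h)
end

section
/- For m ≥ 3, the digraph M_{2,m} on 2m vertices (indexed by pairs (r,i), r ∈ {1,2}, 1 ≤ i ≤ m, with ((r,i),(s,j)) an edge iff r < s, or r = s and i = j; block adjacency matrix [[I, 1],[0, I]] with m×m blocks) satisfies f(M_{2,m}) = 2, f*(M_{2,m}) = 3, and l(M_{2,m}) = m. -/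
theorem SimpleGraph.IsAcyclic.isPath_unique {W : Type} {T : SimpleGraph W} (hT : T.IsAcyclic)
    {x y : W} {p q : T.Walk x y} (hp : p.IsPath) (hq : q.IsPath) : p = q :=
  congrArg Subtype.val ((hT.subsingleton_path x y).elim ⟨p, hp⟩ ⟨q, hq⟩)

theorem SimpleGraph.IsAcyclic.support_subset_of_induce_connected {W : Type} {T : SimpleGraph W}
    (hT : T.IsAcyclic) {S : Set W} (hS : (T.induce S).Connected) {x y : W} (hx : x ∈ S)
    (hy : y ∈ S) {p : T.Walk x y} (hp : p.IsPath) : ∀ w ∈ p.support, w ∈ S := by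
  obtain ⟨q, hq⟩ := hS.exists_isPath ⟨x, hx⟩ ⟨y, hy⟩
  let f : T.induce S →g T := (SimpleGraph.Embedding.induce S).toHom
  have hf : Function.Injective f := (SimpleGraph.Embedding.induce (G := T) S).injective
  have hpq : p = q.map f := hT.isPath_unique hp (SimpleGraph.Walk.IsPath.map hf hq)
  intro w hw
  have hw' : w ∈ (q.map f).support := hpq ▸ hw
  rw [SimpleGraph.Walk.support_map] at hw'
  obtain ⟨z, -, rfl⟩ := List.mem_map.1 hw'
  exact z.2

/-- In a rooted tree, the vertex of a subtree closest to the root lies on the path from the root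
to any vertex of the subtree. -/
theorem SimpleGraph.IsTree.mem_support_of_forall_dist_le {W : Type} {T : SimpleGraph W}
    (hT : T.IsTree) {S : Set W} (hS : (T.induce S).Connected) {r u x : W} (hu : u ∈ S)
    (hmin : ∀ v ∈ S, T.dist r u ≤ T.dist r v) (hx : x ∈ S) {p : T.Walk r x} (hp : p.IsPath) :
    u ∈ p.support := by
  classical
  obtain ⟨a, ha, hlen⟩ := (hT.connected r u).exists_path_of_dist
  obtain ⟨q, hq⟩ := hT.connected.exists_isPath u x
  have hqS := hT.isAcyclic.support_subset_of_induce_connected hS hu hx hq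
  have hpath : (a.append q).IsPath := by
    rw [SimpleGraph.Walk.isPath_def, SimpleGraph.Walk.support_append, List.nodup_append']
    have hnd := hq.support_nodup
    rw [← q.cons_tail_support, List.nodup_cons] at hnd
    refine ⟨ha.support_nodup, hnd.2, ?_⟩
    intro v hva hvq
    have hne : v ≠ u := fun h => hnd.1 (h ▸ hvq)
    have hlt := a.length_takeUntil_lt_length hva hne
    have hle := SimpleGraph.dist_le (a.takeUntil v hva)
    have hvS := hmin v (hqS v (List.mem_of_mem_tail hvq))
    omega
  rw [hT.isAcyclic.isPath_unique hp hpath, SimpleGraph.Walk.mem_support_append_iff]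
  exact Or.inl a.end_mem_support

/-- If every set of the first family of subtrees of a tree meets every set of the second, then one
of the two families has a common vertex. -/
theorem SimpleGraph.IsTree.exists_mem_forall_or_exists_mem_forall {W ι : Type} [Finite ι]
    [Nonempty ι] {T : SimpleGraph W} (hT : T.IsTree) (A D : ι → Set W)
    (hA : ∀ i, (T.induce (A i)).Connected) (hD : ∀ i, (T.induce (D i)).Connected)
    (hAD : ∀ i j, (A i ∩ D j).Nonempty) :
    (∃ z, ∀ i, z ∈ A i) ∨ ∃ z, ∀ i, z ∈ D i := by
  classical
  obtain ⟨r⟩ := hT.connected.nonempty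
  have hconn : ∀ s : ι ⊕ ι, (T.induce (Sum.elim A D s)).Connected := by
    rintro (i | i)
    exacts [hA i, hD i]
  have htop : ∀ s : ι ⊕ ι, ∃ u ∈ Sum.elim A D s,
      ∀ v ∈ Sum.elim A D s, T.dist r u ≤ T.dist r v := by
    intro s
    obtain ⟨w, hw⟩ := (hconn s).nonempty
    have hne : {n | ∃ u ∈ Sum.elim A D s, T.dist r u = n}.Nonempty := ⟨_, w, hw, rfl⟩
    obtain ⟨u, hu, hun⟩ := Nat.sInf_mem hne
    exact ⟨u, hu, fun v hv => hun ▸ Nat.sInf_le ⟨v, hv, rfl⟩⟩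
  choose top htopmem htopmin using htop
  obtain ⟨s, hs⟩ := Finite.exists_max fun s => T.dist r (top s)
  have key : ∀ s', (Sum.elim A D s ∩ Sum.elim A D s').Nonempty → top s ∈ Sum.elim A D s' := by
    rintro s' ⟨x, hx, hx'⟩
    obtain ⟨p, hp⟩ := hT.connected.exists_isPath r x
    have h1 := hT.mem_support_of_forall_dist_le (hconn s) (htopmem s) (htopmin s) hx hp
    have h2 := hT.mem_support_of_forall_dist_le (hconn s') (htopmem s') (htopmin s') hx' hp
    have hsplit := h1
    rw [← p.take_spec h2, SimpleGraph.Walk.mem_support_append_iff] at hsplit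
    rcases hsplit with h | h
    · by_cases hne : top s = top s'
      · exact hne ▸ htopmem s'
      · exfalso
        have hlt := (p.takeUntil _ h2).length_takeUntil_lt_length h hne
        have hle := SimpleGraph.dist_le ((p.takeUntil _ h2).takeUntil _ h)
        obtain ⟨q, hq, hlen⟩ := (hT.connected r (top s')).exists_path_of_dist
        rw [hT.isAcyclic.isPath_unique hq (hp.takeUntil h2)] at hlen
        have := hs s'
        omega
    · exact hT.isAcyclic.support_subset_of_induce_connected (hconn s') (htopmem s') hx'
        (hp.dropUntil h2) _ h
  rcases s with i | i
  · exact Or.inr ⟨top (Sum.inl i), fun j => key (Sum.inr j) (hAD i j)⟩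
  · exact Or.inl ⟨top (Sum.inr i), fun j => key (Sum.inl j) (by
      rw [Set.inter_comm]; exact hAD j i)⟩

/-- In a finite tree rooted at `z`, every vertex other than `z` has a leaf below it. -/
theorem SimpleGraph.IsTree.exists_leaf_mem_support {W : Type} [Finite W] {T : SimpleGraph W}
    (hT : T.IsTree) {z b : W} (hb : b ≠ z) :
    ∃ l ∈ treeLeaves T, ∃ p : T.Walk z l, p.IsPath ∧ b ∈ p.support := by
  classical
  obtain ⟨p₀, hp₀⟩ := hT.connected.exists_isPath z b
  let B : Set W := {l | ∃ p : T.Walk z l, p.IsPath ∧ b ∈ p.support}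
  obtain ⟨l, ⟨p, hp, hbp⟩, hmax⟩ := Set.exists_max_image B (fun l => T.dist z l) (Set.toFinite B)
    ⟨b, p₀, hp₀, p₀.end_mem_support⟩
  have hlen : ∀ {x : W} {q : T.Walk z x}, q.IsPath → q.length = T.dist z x := by
    intro x q hq
    obtain ⟨q', hq', h⟩ := (hT.connected z x).exists_path_of_dist
    rw [hT.isAcyclic.isPath_unique hq hq', h]
  refine ⟨l, ?_, p, hp, hbp⟩
  have hnil : ¬ p.Nil := by
    intro h
    have hsupp := SimpleGraph.Walk.nil_iff_support_eq.1 h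
    rw [hsupp, List.mem_singleton] at hbp
    exact hb hbp
  have hnbr : T.neighborSet l = {p.penultimate} := by
    ext y
    rw [SimpleGraph.mem_neighborSet, Set.mem_singleton_iff]
    constructor
    · intro hly
      by_cases hy : y ∈ p.support
      · exact hT.isAcyclic.eq_penultimate_of_adj_end hp hly hy
      · exfalso
        have hq := hp.concat hy hly
        have hle := hmax y ⟨_, hq, by
          rw [SimpleGraph.Walk.support_concat]
          simp [hbp]⟩
        rw [← hlen hq, ← hlen hp, SimpleGraph.Walk.length_concat] at hle
        omega
    · rintro rfl
      exact (p.adj_penultimate hnil).symm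
  change (T.neighborSet l).ncard = 1
  rw [hnbr, Set.ncard_singleton]

/-- If subtrees `A i` share a vertex and each contains a private vertex `b i`, then the tree has at
least as many leaves as there are subtrees. -/
theorem SimpleGraph.IsTree.card_le_ncard_treeLeaves {W ι : Type} [Finite W] [Finite ι]
    [Nontrivial ι] {T : SimpleGraph W} (hT : T.IsTree) (A : ι → Set W)
    (hA : ∀ i, (T.induce (A i)).Connected) {z : W} (hz : ∀ i, z ∈ A i) (b : ι → W)
    (hb : ∀ i j, b i ∈ A j ↔ i = j) : Nat.card ι ≤ (treeLeaves T).ncard := by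
  classical
  have hbz : ∀ i, b i ≠ z := by
    intro i h
    obtain ⟨j, hj⟩ := exists_ne i
    exact hj ((hb i j).1 (h ▸ hz j)).symm
  choose l hl p hp hbp using fun i => hT.exists_leaf_mem_support (hbz i)
  have aux : ∀ i j, ∀ {x : W} {q : T.Walk z x}, q.IsPath → b i ∈ q.support → x = b j → i = j := by
    rintro i j x q hq hi rfl
    exact (hb i j).1 (hT.isAcyclic.support_subset_of_induce_connected (hA j) (hz j)
      ((hb j j).2 rfl) hq _ hi)
  have hinj : Function.Injective l := by
    intro i j hij
    have hj : b j ∈ (p i).support := by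
      have : p i = (p j).copy rfl hij.symm :=
        hT.isAcyclic.isPath_unique (hp i) ((SimpleGraph.Walk.isPath_copy _ _ _).2 (hp j))
      rw [this, SimpleGraph.Walk.support_copy]
      exact hbp j
    have hsplit := hbp i
    rw [← (p i).take_spec hj, SimpleGraph.Walk.mem_support_append_iff] at hsplit
    rcases hsplit with h | h
    · exact aux i j ((hp i).takeUntil hj) h rfl
    · have hpath : (((p i).takeUntil _ hj).append
          (((p i).dropUntil _ hj).takeUntil _ h)).IsPath := by
        have hall := hp i
        rw [← (p i).take_spec hj, ← ((p i).dropUntil _ hj).take_spec h,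
          SimpleGraph.Walk.append_assoc] at hall
        exact hall.of_append_left
      refine (aux j i hpath ?_ rfl).symm
      rw [SimpleGraph.Walk.mem_support_append_iff]
      exact Or.inl (SimpleGraph.Walk.end_mem_support _)
  rw [← Set.ncard_range_of_injective hinj]
  exact Set.ncard_le_ncard (Set.range_subset_iff.2 hl) (Set.toFinite _)

theorem le_ncard_treeLeaves_of_subtreeRep {m : ℕ} (hm : 3 ≤ m) {W : Type} [Finite W]
    {T : SimpleGraph W} (hT : T.IsTree) (R : SubtreeRep (MkmRel 2 m) T) :
    m ≤ (treeLeaves T).ncard := by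
  have : Nontrivial (Fin m) := Fin.nontrivial_iff_two_le.2 (by omega)
  have hpriv : ∀ r : Fin 2, ∀ i : Fin m, (R.src (r, i) ∩ R.snk (r, i)).Nonempty := fun r i =>
    (R.rep _ _).1 (Or.inr ⟨rfl, rfl⟩)
  have hoff : ∀ (r : Fin 2) (i j : Fin m) (x : W), x ∈ R.src (r, i) → x ∈ R.snk (r, j) →
      i = j := by
    intro r i j x hx hx'
    rcases (R.rep (r, i) (r, j)).2 ⟨x, hx, hx'⟩ with h | h
    · exact absurd h (lt_irrefl _)
    · exact h.2
  choose b hbsrc hbsnk using hpriv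
  have hcard : Nat.card (Fin m) = m := by simp
  rcases hT.exists_mem_forall_or_exists_mem_forall (fun i => R.src ((0 : Fin 2), i))
    (fun j => R.snk ((1 : Fin 2), j)) (fun i => R.src_connected _) (fun i => R.snk_connected _)
    (fun i j => (R.rep _ _).1 (Or.inl Fin.zero_lt_one)) with ⟨z, hz⟩ | ⟨z, hz⟩
  · refine hcard.symm.le.trans (hT.card_le_ncard_treeLeaves _ (fun i => R.src_connected (0, i)) hz
      (b 0) fun i j => ⟨fun h => (hoff 0 j i _ h (hbsnk 0 i)).symm, ?_⟩)
    rintro rfl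
    exact hbsrc 0 i
  · refine hcard.symm.le.trans (hT.card_le_ncard_treeLeaves _ (fun i => R.snk_connected (1, i)) hz
      (b 1) fun i j => ⟨fun h => hoff 1 i j _ (hbsrc 1 i) h, ?_⟩)
    rintro rfl
    exact hbsnk 1 i

/-- The parent of a vertex in the spider rooted at `none`, whose leg `i` consists of `(i, false)`
followed by `(i, true)`. -/
def spiderParent {m : ℕ} : Option (Fin m × Bool) → Option (Fin m × Bool)
  | some (i, true) => some (i, false)
  | _ => none

/-- The spider with `m` legs of length two. -/
def spider (m : ℕ) : SimpleGraph (Option (Fin m × Bool)) :=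
  SimpleGraph.fromRel fun a b => b = spiderParent a

theorem spider_adj_none {m : ℕ} (i : Fin m) : (spider m).Adj none (some (i, false)) := by
  simp [spider, spiderParent]

theorem spider_adj_some {m : ℕ} (i : Fin m) :
    (spider m).Adj (some (i, false)) (some (i, true)) := by
  simp [spider, spiderParent]

theorem spider_connected (m : ℕ) : (spider m).Connected := by
  rw [SimpleGraph.connected_iff_exists_forall_reachable]
  refine ⟨none, ?_⟩
  rintro (_ | ⟨i, _ | _⟩)
  · exact SimpleGraph.Reachable.refl _
  · exact (spider_adj_none i).reachable
  · exact (spider_adj_none i).reachable.trans (spider_adj_some i).reachable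

theorem spider_isTree (m : ℕ) : (spider m).IsTree := by
  rw [SimpleGraph.isTree_iff_connected_and_card]
  refine ⟨spider_connected m, le_antisymm ?_ (spider_connected m).card_vert_le_card_edgeSet_add_one⟩
  have hsub : (spider m).edgeSet ⊆
      Set.range fun x : Fin m × Bool => s(some x, spiderParent (some x)) := by
    intro e
    induction e with
    | _ a b =>
      rw [SimpleGraph.mem_edgeSet, spider, SimpleGraph.fromRel_adj]
      rintro ⟨hne, rfl | rfl⟩
      · cases a with
        | none => exact absurd rfl hne
        | some x => exact ⟨x, rfl⟩
      · cases b with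
        | none => exact absurd rfl hne
        | some x => exact ⟨x, Sym2.eq_swap⟩
  have hle : (spider m).edgeSet.ncard ≤ Nat.card (Fin m × Bool) :=
    (Set.ncard_le_ncard hsub (Set.toFinite _)).trans
      (by rw [← Set.image_univ, ← Set.ncard_univ]; exact Set.ncard_image_le (Set.toFinite _))
  rw [Nat.card_coe_set_eq, Finite.card_option]
  omega

theorem ncard_treeLeaves_spider_le {m : ℕ} (hm : 3 ≤ m) : (treeLeaves (spider m)).ncard ≤ m := by
  have hsub : treeLeaves (spider m) ⊆ Set.range fun i : Fin m => some (i, true) := by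
    intro w hw
    obtain ⟨y, hy⟩ := Set.ncard_eq_one.1 hw
    have heq : ∀ a, (spider m).Adj w a → a = y := fun a ha => by
      have : a ∈ (spider m).neighborSet w := ha
      rwa [hy] at this
    rcases w with _ | ⟨i, _ | _⟩
    · have h := (heq _ (spider_adj_none ⟨0, by omega⟩)).trans
        (heq _ (spider_adj_none ⟨1, by omega⟩)).symm
      simp at h
    · have h := (heq _ (spider_adj_none i).symm).trans (heq _ (spider_adj_some i)).symm
      simp at h
    · exact ⟨i, rfl⟩
  refine (Set.ncard_le_ncard hsub (Set.toFinite _)).trans ?_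
  rw [← Set.image_univ]
  exact (Set.ncard_image_le (Set.toFinite _)).trans (by simp)

theorem nonempty_subtreeRep_spider (m : ℕ) : Nonempty (SubtreeRep (MkmRel 2 m) (spider m)) := by
  have hsingle : ∀ x, ((spider m).induce {x}).Connected := fun x => by
    have : Subsingleton ({x} : Set (Option (Fin m × Bool))) := by simp
    have : Nonempty ({x} : Set (Option (Fin m × Bool))) := by simp
    exact SimpleGraph.Connected.of_subsingleton
  have hpair : ∀ i : Fin m, ((spider m).induce {none, some (i, false)}).Connected := fun i =>
    SimpleGraph.induce_pair_connected_of_adj (spider_adj_none i)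
  refine ⟨{
    src := fun v => if v.1 = 0
      then {none, some (v.2, false)} ∪ {some (v.2, false), some (v.2, true)}
      else {some (v.2, false)}
    snk := fun v => if v.1 = 0 then {some (v.2, true)} else {none, some (v.2, false)}
    src_connected := ?_
    snk_connected := ?_
    rep := ?_ }⟩
  · intro v
    by_cases h : v.1 = 0
    · rw [if_pos h]
      exact SimpleGraph.induce_union_connected (hpair v.2).preconnected
        (SimpleGraph.induce_pair_connected_of_adj (spider_adj_some v.2)).preconnected
        ⟨some (v.2, false), by simp, by simp⟩
    · rw [if_neg h]
      exact hsingle _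
  · intro v
    by_cases h : v.1 = 0
    · rw [if_pos h]
      exact hsingle _
    · rw [if_neg h]
      exact hpair v.2
  · rintro ⟨r, i⟩ ⟨s, j⟩
    fin_cases r <;> fin_cases s <;>
      simp [MkmRel, Set.Nonempty, eq_comm]

theorem digLeafage_MkmRel_two {m : ℕ} (hm : 3 ≤ m) : digLeafage (MkmRel 2 m) = m := by
  have hmem : (treeLeaves (spider m)).ncard ∈ {k | ∃ (W : Type) (_ : Fintype W)
      (T : SimpleGraph W), T.IsTree ∧ Nonempty (SubtreeRep (MkmRel 2 m) T) ∧
        (treeLeaves T).ncard = k} :=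
    ⟨_, inferInstance, spider m, spider_isTree m, nonempty_subtreeRep_spider m, rfl⟩
  refine le_antisymm ((Nat.sInf_le hmem).trans (ncard_treeLeaves_spider_le hm))
    (le_csInf ⟨_, hmem⟩ ?_)
  rintro k ⟨W, _, T, hT, ⟨R⟩, rfl⟩
  exact le_ncard_treeLeaves_of_subtreeRep hm hT R

theorem ferrersDim_MkmRel_two {m : ℕ} (hm : 3 ≤ m) : ferrersDim (MkmRel 2 m) = 2 := by
  have hmem : 2 ∈ {k | ∃ F : Fin k → Fin 2 × Fin m → Fin 2 × Fin m → Prop,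
      (∀ i, IsFerrers (F i)) ∧ ∀ u v, MkmRel 2 m u v ↔ ∀ i, F i u v} := by
    refine ⟨![fun p q => p.1 < q.1 ∨ p.1 = q.1 ∧ p.2 ≤ q.2,
      fun p q => p.1 < q.1 ∨ p.1 = q.1 ∧ q.2 ≤ p.2], ?_, ?_⟩
    · intro i
      fin_cases i <;> intro u v <;> simp only [Set.subset_def, Set.mem_ofPred_eq] <;>
        simp <;> grind
    · intro u v
      simp only [Fin.forall_fin_two, MkmRel, Matrix.cons_val_zero, Matrix.cons_val_one]
      grind
  refine le_antisymm (Nat.sInf_le hmem) (le_csInf ⟨_, hmem⟩ ?_)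
  rintro k ⟨F, hF, hE⟩
  by_contra! hk
  let a : Fin m := ⟨0, by omega⟩
  let b : Fin m := ⟨1, by omega⟩
  have hab : a ≠ b := by simp [a, b]
  have hnE : ∀ c d : Fin m, c ≠ d → ¬ MkmRel 2 m (0, c) (0, d) := fun c d h => by
    simp [MkmRel, h]
  have hrefl : ∀ (i : Fin k) (c : Fin m), F i (0, c) (0, c) := fun i c =>
    (hE _ _).1 (Or.inr ⟨rfl, rfl⟩) i
  obtain ⟨i, hi⟩ := not_forall.1 (mt (hE _ _).2 (hnE a b hab))
  obtain ⟨j, hj⟩ := not_forall.1 (mt (hE _ _).2 (hnE b a hab.symm))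
  obtain rfl : i = j := by ext; omega
  rcases hF i (0, a) (0, b) with h | h
  · exact hj (h (hrefl i a))
  · exact hi (h (hrefl i b))

/-- An assignment of fewer than `m` colours to ordered pairs that separates each pair from its
reverse is not determined by the second entry. -/
theorem exists_colour_ne_of_lt {m k : ℕ} (hk : k < m) (hm : 2 ≤ m) (c : Fin m → Fin m → Fin k)
    (hc : ∀ i j, i ≠ j → c i j ≠ c j i) :
    ∃ j i i', i ≠ j ∧ i' ≠ j ∧ c i j ≠ c i' j := by
  by_contra! h
  have : Nontrivial (Fin m) := Fin.nontrivial_iff_two_le.2 hm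
  choose o ho using fun j : Fin m => exists_ne j
  have hinj : Function.Injective fun j => c (o j) j := by
    intro i j hij
    by_contra hne
    exact hc i j hne ((h j i (o j) hne (ho j)).trans (hij.symm.trans
      (h i (o i) j (ho i) (Ne.symm hne))))
  have := Fintype.card_le_of_injective _ hinj
  simp at this
  omega

theorem three_le_of_disjoint_ferrers_cover {m k : ℕ} (hm : 3 ≤ m)
    (F : Fin k → Fin 2 × Fin m → Fin 2 × Fin m → Prop) (hF : ∀ i, IsFerrers (F i))
    (hdisj : ∀ i j, i ≠ j → ∀ u v, ¬ (F i u v ∧ F j u v))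
    (hcov : ∀ u v, ¬ MkmRel 2 m u v ↔ ∃ i, F i u v) : 3 ≤ k := by
  by_contra! hk
  have hnot : ∀ (i : Fin k) (u v), MkmRel 2 m u v → ¬ F i u v := fun i u v h hi =>
    (hcov u v).2 ⟨i, hi⟩ h
  have hex : ∀ (r : Fin 2) (i j : Fin m), ∃ c : Fin k, i ≠ j → F c (r, i) (r, j) := by
    intro r i j
    by_cases h : i = j
    · obtain ⟨c, -⟩ := (hcov (1, i) (0, i)).1 (by simp [MkmRel])
      exact ⟨c, fun h' => absurd h h'⟩
    · obtain ⟨c, hc⟩ := (hcov (r, i) (r, j)).1 (by simp [MkmRel, h])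
      exact ⟨c, fun _ => hc⟩
  choose c hc using hex
  have hne : ∀ r i j, i ≠ j → c r i j ≠ c r j i := by
    intro r i j hij heq
    have h1 := hc r i j hij
    have h2 := hc r j i hij.symm
    rw [← heq] at h2
    rcases hF (c r i j) (r, i) (r, j) with h | h
    · exact hnot _ _ _ (Or.inr ⟨rfl, rfl⟩) (h h1)
    · exact hnot _ _ _ (Or.inr ⟨rfl, rfl⟩) (h h2)
  have hcross : ∀ (d : Fin k) (i j i' j' : Fin m), F d (0, i) (0, j) → F d (1, i') (1, j') →
      F d (1, i') (0, j) := by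
    intro d i j i' j' h1 h2
    rcases hF d (0, i) (1, i') with h | h
    · exact h h1
    · exact absurd (h h2) (hnot _ _ _ (Or.inl Fin.zero_lt_one))
  obtain ⟨j, i, i', hi, hi', hcol⟩ :=
    exists_colour_ne_of_lt (by omega) (by omega) (c 0) (hne 0)
  obtain ⟨y, x, x', hx, hx', hrow⟩ :=
    exists_colour_ne_of_lt (by omega) (by omega) (fun a b => c 1 b a) fun a b h => hne 1 b a h.symm
  have h1 := hc 0 i j hi
  have h2 := hc 0 i' j hi'
  have h3 := hc 1 y x hx.symm
  have h4 := hc 1 y x' hx'.symm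
  have hcases : (c 1 y x = c 0 i j ∧ c 1 y x' = c 0 i' j) ∨
      (c 1 y x = c 0 i' j ∧ c 1 y x' = c 0 i j) := by
    simp only [Fin.ext_iff, ne_eq] at *
    omega
  rcases hcases with ⟨e, e'⟩ | ⟨e, e'⟩ <;> rw [e] at h3 <;> rw [e'] at h4
  · exact hdisj _ _ hcol _ _ ⟨hcross _ _ _ _ _ h1 h3, hcross _ _ _ _ _ h2 h4⟩
  · exact hdisj _ _ hcol _ _ ⟨hcross _ _ _ _ _ h1 h4, hcross _ _ _ _ _ h2 h3⟩

theorem fstar_MkmRel_two {m : ℕ} (hm : 3 ≤ m) : fstar (MkmRel 2 m) = 3 := by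
  have hmem : 3 ∈ {k | ∃ F : Fin k → Fin 2 × Fin m → Fin 2 × Fin m → Prop,
      (∀ i, IsFerrers (F i)) ∧ (∀ i j, i ≠ j → ∀ u v, ¬ (F i u v ∧ F j u v)) ∧
      ∀ u v, ¬ MkmRel 2 m u v ↔ ∃ i, F i u v} := by
    refine ⟨![fun p q => q.1 < p.1 ∨ p.1 = q.1 ∧ q.2 < p.2,
      fun p q => p.1 = 0 ∧ q.1 = 0 ∧ p.2 < q.2, fun p q => p.1 = 1 ∧ q.1 = 1 ∧ p.2 < q.2],
      ?_, ?_, ?_⟩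
    · intro i
      fin_cases i <;> intro u v <;> simp only [Set.subset_def, Set.mem_ofPred_eq] <;>
        simp <;> grind
    · intro i j hij u v
      fin_cases i <;> fin_cases j <;> simp at hij ⊢ <;> grind
    · intro u v
      simp only [Fin.exists_fin_succ, MkmRel]
      simp
      grind
  refine le_antisymm (Nat.sInf_le hmem) (le_csInf ⟨_, hmem⟩ ?_)
  rintro k ⟨F, hF, hdisj, hcov⟩
  exact three_le_of_disjoint_ferrers_cover hm F hF hdisj hcov

/-- For `m ≥ 3`, the digraph `M_{2,m}` on `2m` vertices satisfies
`f(M_{2,m}) = 2`, `f*(M_{2,m}) = 3`, and `l(M_{2,m}) = m`. -/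
theorem stmt_13 (m : ℕ) (hm : 3 ≤ m) :
    ferrersDim (MkmRel 2 m) = 2 ∧ fstar (MkmRel 2 m) = 3 ∧
    digLeafage (MkmRel 2 m) = m :=
  ⟨ferrersDim_MkmRel_two hm, fstar_MkmRel_two hm, digLeafage_MkmRel_two hm⟩
end

section
/- For every digraph D with w(P(D)) ≥ 2, the catch leafage satisfies l*(D) ≤ w(P(D)). -/
/-- Dilworth's theorem: a finite set in which every antichain has at most `k` elements is
covered by `k` chains, given here as the colour classes of a colouring. -/
theorem exists_chain_coloring_of_antichain_card_le {α : Type*} [PartialOrder α]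
    (s : Finset α) (k : ℕ)
    (hs : ∀ t ⊆ s, IsAntichain (· ≤ ·) (t : Set α) → t.card ≤ k) :
    ∃ c : α → ℕ, (∀ a ∈ s, c a < k) ∧
      ∀ a ∈ s, ∀ b ∈ s, c a = c b → a ≤ b ∨ b ≤ a := by
  classical
  induction s using Finset.strongInduction generalizing k with
  | H s ih =>
  rcases s.eq_empty_or_nonempty with rfl | hne
  · exact ⟨fun _ => 0, by simp, by simp⟩
  obtain ⟨a, ha⟩ := s.exists_maximal hne
  have has : a ∈ s := ha.prop
  have hk : 1 ≤ k := by
    simpa using hs {a} (by simpa using has) (by simp)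
  -- Removing a chain containing `a` that meets every antichain of size `k` completes the proof.
  have extend : ∀ K : Finset α, a ∈ K →
      (∀ x ∈ K, ∀ y ∈ K, x ≤ y ∨ y ≤ x) →
      (∀ t ⊆ s \ K, IsAntichain (· ≤ ·) (t : Set α) → t.card ≠ k) →
      ∃ c : α → ℕ, (∀ a ∈ s, c a < k) ∧
        ∀ a ∈ s, ∀ b ∈ s, c a = c b → a ≤ b ∨ b ≤ a := by
    intro K haK hK hKs
    obtain ⟨c, hc, hcc⟩ := ih (s \ K)
      ((Finset.ssubset_iff_of_subset Finset.sdiff_subset).2 ⟨a, has, by simp [haK]⟩) (k - 1)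
      (fun t ht hta => by
        have h₁ := hs t (ht.trans Finset.sdiff_subset) hta
        have h₂ := hKs t ht hta
        omega)
    refine ⟨fun x => if x ∈ K then k - 1 else c x, fun x hx => ?_, fun x hx y hy hxy => ?_⟩
    · by_cases hxK : x ∈ K
      · simp only [hxK, if_true]; omega
      · have := hc x (Finset.mem_sdiff.2 ⟨hx, hxK⟩)
        simp only [hxK, if_false]; omega
    · by_cases hxK : x ∈ K <;> by_cases hyK : y ∈ K <;>
        simp only [hxK, hyK, if_true, if_false] at hxy
      · exact hK x hxK y hyK
      · have := hc y (Finset.mem_sdiff.2 ⟨hy, hyK⟩)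
        omega
      · have := hc x (Finset.mem_sdiff.2 ⟨hx, hxK⟩)
        omega
      · exact hcc x (Finset.mem_sdiff.2 ⟨hx, hxK⟩) y (Finset.mem_sdiff.2 ⟨hy, hyK⟩) hxy
  by_cases hA : ∃ t ⊆ s.erase a, IsAntichain (· ≤ ·) (t : Set α) ∧ t.card = k
  swap
  · refine extend {a} (by simp) (by simp) fun t ht hta htk => hA ⟨t, ?_, hta, htk⟩
    rwa [Finset.sdiff_singleton_eq_erase] at ht
  obtain ⟨t₀, ht₀, hta₀, htk₀⟩ := hA
  obtain ⟨c, hc, hcc⟩ := ih (s.erase a) (Finset.erase_ssubset has) k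
    (fun t ht => hs t (ht.trans (Finset.erase_subset _ _)))
  -- An antichain of size `k` meets every chain.
  have meets : ∀ t ⊆ s.erase a, IsAntichain (· ≤ ·) (t : Set α) → t.card = k →
      ∀ i < k, ∃ x ∈ t, c x = i := by
    intro t ht hta htk i hi
    have hinj : Set.InjOn c t := by
      intro x hx y hy hxy
      by_contra hne
      rcases hcc x (ht hx) y (ht hy) hxy with h | h
      · exact hta hx hy hne h
      · exact hta hy hx (Ne.symm hne) h
    have himg : t.image c = Finset.range k := by
      refine Finset.eq_of_subset_of_card_le (fun j hj => ?_) ?_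
      · obtain ⟨x, hx, rfl⟩ := Finset.mem_image.1 hj
        exact Finset.mem_range.2 (hc x (ht hx))
      · rw [Finset.card_image_of_injOn hinj, htk, Finset.card_range]
    rw [← Finset.mem_image, himg]
    exact Finset.mem_range.2 hi
  -- The top element of each chain among those lying in an antichain of size `k`.
  have top : ∀ i : Fin k, ∃ x ∈ s.erase a, c x = i ∧
      (∃ t ⊆ s.erase a, IsAntichain (· ≤ ·) (t : Set α) ∧ t.card = k ∧ x ∈ t) ∧
      ∀ t ⊆ s.erase a, IsAntichain (· ≤ ·) (t : Set α) → t.card = k →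
        ∀ y ∈ t, c y = i → y ≤ x := by
    intro i
    let B := (s.erase a).filter fun x => c x = i ∧
      ∃ t ⊆ s.erase a, IsAntichain (· ≤ ·) (t : Set α) ∧ t.card = k ∧ x ∈ t
    have hB : B.Nonempty := by
      obtain ⟨x, hx, hxi⟩ := meets t₀ ht₀ hta₀ htk₀ i i.2
      exact ⟨x, Finset.mem_filter.2 ⟨ht₀ hx, hxi, t₀, ht₀, hta₀, htk₀, hx⟩⟩
    obtain ⟨x, hx⟩ := B.exists_maximal hB
    obtain ⟨hxs, hxi, hxt⟩ := Finset.mem_filter.1 hx.prop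
    refine ⟨x, hxs, hxi, hxt, fun t ht hta htk y hy hyi => ?_⟩
    rcases hcc y (ht hy) x hxs (hyi.trans hxi.symm) with h | h
    · exact h
    · exact hx.2 (Finset.mem_filter.2 ⟨ht hy, hyi, t, ht, hta, htk, hy⟩) h
  choose x hxs hxi hxt hxtop using top
  have hx_anti : ∀ i j, x i ≤ x j → i = j := by
    intro i j hij
    obtain ⟨t, ht, hta, htk, hxt⟩ := hxt j
    obtain ⟨y, hy, hyi⟩ := meets t ht hta htk i i.2
    have hyx : y = x j := hta.eq hy hxt ((hxtop i t ht hta htk y hy hyi).trans hij)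
    exact Fin.ext (by rw [← hyi, hyx, hxi])
  by_cases hax : ∃ i, x i ≤ a
  · obtain ⟨i, hi⟩ := hax
    refine extend (insert a ((s.erase a).filter fun y => c y = i ∧ y ≤ x i)) (by simp) ?_ ?_
    · intro y hy z hz
      rw [Finset.mem_insert, Finset.mem_filter] at hy hz
      rcases hy with rfl | ⟨hys, hyi, hyx⟩ <;> rcases hz with rfl | ⟨hzs, hzi, hzx⟩
      · exact Or.inl le_rfl
      · exact Or.inr (hzx.trans hi)
      · exact Or.inl (hyx.trans hi)
      · exact hcc y hys z hzs (hyi.trans hzi.symm)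
    · intro t ht hta htk
      have hts : t ⊆ s.erase a := fun y hy => by
        have := ht hy
        simp only [Finset.mem_sdiff, Finset.mem_insert, not_or] at this
        exact Finset.mem_erase.2 ⟨this.2.1, this.1⟩
      obtain ⟨y, hy, hyi⟩ := meets t hts hta htk i i.2
      refine (Finset.mem_sdiff.1 (ht hy)).2 (Finset.mem_insert_of_mem (Finset.mem_filter.2 ?_))
      exact ⟨hts hy, hyi, hxtop i t hts hta htk y hy hyi⟩
  · exfalso
    have hinj : Function.Injective x := fun i j hij => hx_anti i j hij.le
    have hanot : a ∉ Finset.univ.image x := by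
      intro h
      obtain ⟨i, -, hi⟩ := Finset.mem_image.1 h
      exact hax ⟨i, hi.le⟩
    have hcard := hs (insert a (Finset.univ.image x)) (by
        intro y hy
        rcases Finset.mem_insert.1 hy with rfl | hy
        · exact has
        · obtain ⟨i, -, rfl⟩ := Finset.mem_image.1 hy
          exact Finset.mem_of_mem_erase (hxs i)) (by
        intro y hy z hz hne hyz
        rcases Finset.mem_insert.1 hy with rfl | hy' <;>
          rcases Finset.mem_insert.1 hz with rfl | hz'
        · exact hne rfl
        · obtain ⟨i, -, rfl⟩ := Finset.mem_image.1 hz'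
          exact hax ⟨i, ha.2 (Finset.mem_of_mem_erase (hxs i)) hyz⟩
        · obtain ⟨i, -, rfl⟩ := Finset.mem_image.1 hy'
          exact hax ⟨i, hyz⟩
        · obtain ⟨i, -, rfl⟩ := Finset.mem_image.1 hy'
          obtain ⟨j, -, rfl⟩ := Finset.mem_image.1 hz'
          exact hne (congrArg x (hx_anti i j hyz)))
    rw [Finset.card_insert_of_notMem hanot, Finset.card_image_of_injective _ hinj,
      Finset.card_univ, Fintype.card_fin] at hcard
    omega

/-- The spider with `k` legs, each a path on `n` vertices: `none` is the body and `some (i, j)`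
is the vertex at distance `j + 1` from the body on the leg `i`. -/
def spiderGraph (k n : ℕ) : SimpleGraph (Option (Fin k × Fin n)) :=
  SimpleGraph.fromRel fun a b => ∃ x : Fin k × Fin n, b = some x ∧
    ((a = none ∧ x.2.val = 0) ∨ ∃ y : Fin k × Fin n, a = some y ∧ y.1 = x.1 ∧ y.2.val + 1 = x.2)

namespace spiderGraph

variable {k n : ℕ}

theorem adj_none_zero (i : Fin k) (h : 0 < n) :
    (spiderGraph k n).Adj none (some (i, ⟨0, h⟩)) := by
  simp [spiderGraph]

theorem adj_succ (i : Fin k) (j : ℕ) (h : j + 1 < n) :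
    (spiderGraph k n).Adj (some (i, ⟨j, by omega⟩)) (some (i, ⟨j + 1, h⟩)) := by
  simp [spiderGraph]

/-- A set of vertices containing the body and closed under moving towards it is connected. -/
theorem induce_connected (S : Set (Option (Fin k × Fin n))) (h0 : none ∈ S)
    (hS : ∀ (i : Fin k) (j : ℕ) (h : j + 1 < n), some (i, ⟨j + 1, h⟩) ∈ S →
      some (i, ⟨j, by omega⟩) ∈ S) :
    ((spiderGraph k n).induce S).Connected := by
  rw [SimpleGraph.connected_iff_exists_forall_reachable]
  refine ⟨⟨none, h0⟩, ?_⟩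
  have key : ∀ (i : Fin k) (j : ℕ) (h : j < n) (hm : some (i, ⟨j, h⟩) ∈ S),
      ((spiderGraph k n).induce S).Reachable ⟨none, h0⟩ ⟨some (i, ⟨j, h⟩), hm⟩ := by
    intro i j
    induction j with
    | zero =>
      intro h hm
      exact SimpleGraph.Adj.reachable (SimpleGraph.induce_adj.2 (adj_none_zero i h))
    | succ j ih =>
      intro h hm
      exact (ih (by omega) (hS i j h hm)).trans
        (SimpleGraph.Adj.reachable (SimpleGraph.induce_adj.2 (adj_succ i j h)))
  rintro ⟨_ | ⟨i, j, h⟩, hm⟩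
  · rfl
  · exact key i j h hm

theorem connected : (spiderGraph k n).Connected :=
  (SimpleGraph.induceUnivIso _).connected_iff.1
    (induce_connected Set.univ (Set.mem_univ _) fun _ _ _ _ => Set.mem_univ _)

theorem isTree : (spiderGraph k n).IsTree := by
  rw [SimpleGraph.isTree_iff_connected_and_card]
  refine ⟨connected, le_antisymm ?_ connected.card_vert_le_card_edgeSet_add_one⟩
  let parent : Fin k × Fin n → Option (Fin k × Fin n) := fun x =>
    if x.2.val = 0 then none else some (x.1, ⟨x.2 - 1, by omega⟩)
  have hsub : (spiderGraph k n).edgeSet ⊆ Set.range fun x => s(parent x, some x) := by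
    have key : ∀ (a : Option (Fin k × Fin n)) (x : Fin k × Fin n),
        ((a = none ∧ x.2.val = 0) ∨
          ∃ y : Fin k × Fin n, a = some y ∧ y.1 = x.1 ∧ y.2.val + 1 = x.2) → parent x = a := by
      rintro a x (⟨rfl, h⟩ | ⟨y, rfl, h1, h2⟩)
      · simp [parent, h]
      · have : x.2.val ≠ 0 := by omega
        simp only [parent, this, if_false, Option.some.injEq]
        exact Prod.ext h1.symm (Fin.ext (by simp only; omega))
    intro e
    induction e with
    | h a b =>
      intro h
      rw [SimpleGraph.mem_edgeSet, spiderGraph, SimpleGraph.fromRel_adj] at h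
      rcases h.2 with ⟨x, rfl, hx⟩ | ⟨x, rfl, hx⟩
      · exact ⟨x, by simp only [key a x hx]⟩
      · exact ⟨x, by simp only [key b x hx]; exact Sym2.eq_swap⟩
  have h := (Set.ncard_le_ncard hsub (Set.finite_range _)).trans
    (Set.image_univ ▸ Set.ncard_image_le Set.finite_univ)
  rw [Set.ncard_univ] at h
  rw [Nat.card_coe_set_eq, Finite.card_option]
  omega

theorem ncard_treeLeaves_le (hk : 2 ≤ k) (hn : 0 < n) :
    (treeLeaves (spiderGraph k n)).ncard ≤ k := by
  have not_leaf : ∀ {w a b}, (spiderGraph k n).Adj w a → (spiderGraph k n).Adj w b → a ≠ b →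
      w ∉ treeLeaves (spiderGraph k n) := by
    intro w a b ha hb hab hw
    obtain ⟨z, hz⟩ := Set.ncard_eq_one.1 hw
    have ha' : a ∈ (spiderGraph k n).neighborSet w := ha
    have hb' : b ∈ (spiderGraph k n).neighborSet w := hb
    rw [hz] at ha' hb'
    exact hab (ha'.trans hb'.symm)
  have hsub : treeLeaves (spiderGraph k n) ⊆
      Set.range fun i : Fin k => some (i, (⟨n - 1, by omega⟩ : Fin n)) := by
    rintro (_ | ⟨i, j, hj⟩) hw
    · exact absurd hw (not_leaf (adj_none_zero ⟨0, by omega⟩ hn)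
        (adj_none_zero ⟨1, by omega⟩ hn) (by simp))
    · by_cases hlast : j = n - 1
      · exact ⟨i, by simp [hlast]⟩
      · have hup := adj_succ (n := n) i j (by omega)
        rcases j with _ | j
        · exact absurd hw (not_leaf (adj_none_zero i hj).symm hup (by simp))
        · exact absurd hw (not_leaf (adj_succ i j hj).symm hup (by simp; omega))
  have h := (Set.ncard_le_ncard hsub (Set.finite_range _)).trans
    (Set.image_univ ▸ Set.ncard_image_le Set.finite_univ)
  rwa [Set.ncard_univ, Nat.card_fin] at h

end spiderGraph

theorem antichain_card_le_incWidth {V : Type} [Finite V] (E : V → V → Prop)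
    (A : Finset (Set V)) (hA : (A : Set (Set V)) ⊆ Set.range fun v => {u | E u v})
    (hanti : IsAntichain (· ⊆ ·) (A : Set (Set V))) : A.card ≤ incWidth E := by
  refine le_csSup ⟨(Set.range fun v => {u | E u v}).ncard, ?_⟩ ⟨A, hA, hanti, rfl⟩
  rintro _ ⟨B, hB, -, rfl⟩
  simpa using Set.ncard_le_ncard hB (Set.finite_range _)

/-- For every digraph `D` with `w(P(D)) ≥ 2`, the catch leafage
satisfies `l*(D) ≤ w(P(D))`. -/
theorem stmt_14 {V : Type} [Fintype V] (E : V → V → Prop)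
    (hw : 2 ≤ incWidth E) :
    catchLeafage E ≤ incWidth E := by
  classical
  obtain ⟨c, hc, hcc⟩ := exists_chain_coloring_of_antichain_card_le
    (Finset.univ.image fun v => {u | E u v}) (incWidth E)
    (fun t ht hta => antichain_card_le_incWidth E t (fun x hx => by simpa using ht hx) hta)
  have hmem : ∀ v, {u | E u v} ∈ Finset.univ.image fun v => {u | E u v} := fun v =>
    Finset.mem_image_of_mem _ (Finset.mem_univ v)
  let leg : V → Fin (incWidth E) := fun v => ⟨c {u | E u v}, hc _ (hmem v)⟩
  -- On each leg, larger predecessor sets lie closer to the body.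
  let pos : V → Fin (Fintype.card V + 1) := fun v =>
    ⟨Fintype.card V - {u | E u v}.ncard, by omega⟩
  have hmono : ∀ v w, leg v = leg w → pos v ≤ pos w → {u | E u w} ⊆ {u | E u v} := by
    intro v w hleg hpos
    rcases hcc _ (hmem v) _ (hmem w) (Fin.ext_iff.1 hleg) with h | h
    · have hbound : {u | E u w}.ncard ≤ Fintype.card V := by
        simpa using Set.ncard_le_card {u | E u w}
      have hbound' : {u | E u v}.ncard ≤ Fintype.card V := by
        simpa using Set.ncard_le_card {u | E u v}
      have hpos' : Fintype.card V - {u | E u v}.ncard ≤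
        Fintype.card V - {u | E u w}.ncard := hpos
      exact (Set.eq_of_subset_of_ncard_le h (by omega)).ge
    · exact h
  let R : SubtreeRep E (spiderGraph (incWidth E) (Fintype.card V + 1)) :=
    { src := fun u => {x | ∀ y, x = some y → ∃ v, E u v ∧ leg v = y.1 ∧ y.2 ≤ pos v}
      snk := fun v => {some (leg v, pos v)}
      src_connected := fun u => by
        refine spiderGraph.induce_connected _ (by simp) fun i j h hm => ?_
        obtain ⟨v, hv, hleg, hpos⟩ := hm _ rfl
        rintro _ ⟨⟩
        exact ⟨v, hv, hleg, le_trans (Fin.mk_le_mk.2 (Nat.le_succ j)) hpos⟩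
      snk_connected := fun v => by
        rw [SimpleGraph.connected_iff_exists_forall_reachable]
        exact ⟨⟨_, rfl⟩, fun ⟨_, h⟩ => by cases h; rfl⟩
      rep := fun u v => by
        constructor
        · intro h
          refine ⟨_, ?_, rfl⟩
          rintro _ ⟨⟩
          exact ⟨v, h, rfl, le_rfl⟩
        · rintro ⟨_, hx, rfl⟩
          obtain ⟨w, hw, hleg, hpos⟩ := hx _ rfl
          exact hmono v w hleg.symm hpos hw }
  have hle : catchLeafage E ≤ (treeLeaves (spiderGraph (incWidth E) (Fintype.card V + 1))).ncard :=
    Nat.sInf_le ⟨_, inferInstance, _, R, spiderGraph.isTree, fun v => ⟨_, rfl⟩, rfl⟩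
  exact hle.trans (spiderGraph.ncard_treeLeaves_le hw (Nat.succ_pos _))
end

section
/- For n ≥ 3, let F_n be the digraph on vertices {1, …, n} defined by: for i, j < n, (i,j) ∈ E(F_n) iff i = j; and (i,n) ∈ E(F_n) and (n,j) ∈ E(F_n) for all i, j ≤ n (adjacency matrix [[I, Y],[Yᵀ, 1]] with I the (n−1)×(n−1) identity and Y a column of n−1 ones). Then f*(F_n) = l(F_n) = 2, but l*(F_n) = n − 1. -/
namespace SimpleGraph

variable {W : Type} {T : SimpleGraph W}

/-- In a finite tree, the path from `c` to a vertex `x ≠ c` extends to a path ending at a leaf. -/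
theorem IsTree.exists_path_to_leaf [Finite W] (hT : T.IsTree) {c x : W} (hx : x ≠ c) :
    ∃ (l : W) (p : T.Walk c l), p.IsPath ∧ x ∈ p.support ∧ l ∈ treeLeaves T := by
  have := Fintype.ofFinite W
  classical
  let P : ℕ → Prop := fun m ↦ ∃ (l : W) (p : T.Walk c l),
    p.IsPath ∧ x ∈ p.support ∧ p.length = m
  have hbound : ∀ m, P m → m ≤ Fintype.card W := by
    rintro m ⟨l, p, hp, -, rfl⟩
    exact hp.length_lt.le
  obtain ⟨q, hq, -⟩ := hT.existsUnique_path c x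
  have hP : P q.length := ⟨x, q, hq, q.end_mem_support, rfl⟩
  obtain ⟨l, p, hp, hxp, hlen⟩ := Nat.findGreatest_spec (hbound _ hP) hP
  have hnil : ¬ p.Nil := by
    intro h
    cases p with
    | nil => simp at hxp; exact hx hxp
    | cons => simp at h
  refine ⟨l, p, hp, hxp, Set.ncard_eq_one.2 ⟨p.penultimate, ?_⟩⟩
  ext y
  simp only [mem_neighborSet, Set.mem_singleton_iff]
  constructor
  · intro hy
    by_cases hyp : y ∈ p.support
    · exact hT.isAcyclic.eq_penultimate_of_adj_end hp hy hyp
    · have hP' : P (p.length + 1) :=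
        ⟨y, p.concat hy, hp.concat hyp hy, by simp [Walk.support_concat, hxp], by simp⟩
      have := Nat.le_findGreatest (hbound _ hP') hP'
      omega
  · rintro rfl
    exact (p.adj_penultimate hnil).symm

/-- A finite tree with at least two vertices has at least two leaves. -/
theorem IsTree.two_le_ncard_treeLeaves [Finite W] [Nontrivial W] (hT : T.IsTree) :
    2 ≤ (treeLeaves T).ncard := by
  obtain ⟨c, x, hcx⟩ := exists_pair_ne W
  obtain ⟨l, -, -, -, hl⟩ := hT.exists_path_to_leaf hcx.symm
  obtain ⟨y, hy⟩ := exists_ne l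
  obtain ⟨l', p, hp, hyp, hl'⟩ := hT.exists_path_to_leaf hy
  have hne : l ≠ l' := by
    rintro rfl
    rw [(Walk.isPath_iff_nil.1 hp).eq_nil] at hyp
    simp at hyp
    exact hy hyp
  exact (Set.one_lt_ncard (Set.toFinite _)).2 ⟨l, hl, l', hl', hne⟩

/-- In an acyclic graph, a path joining two vertices of a connected set stays in that set. -/
theorem IsAcyclic.support_subset_of_induce_connected_s17 (hT : T.IsAcyclic) {S : Set W}
    (hS : (T.induce S).Connected) {a b : W} (ha : a ∈ S) (hb : b ∈ S) {p : T.Walk a b}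
    (hp : p.IsPath) : ∀ x ∈ p.support, x ∈ S := by
  classical
  obtain ⟨q⟩ := hS.preconnected ⟨a, ha⟩ ⟨b, hb⟩
  let r := (q.map (Embedding.induce S).toHom).toPath
  have hr : p = r.1 := congrArg Subtype.val ((hT.subsingleton_path a b).elim ⟨p, hp⟩ r)
  intro x hx
  rw [hr] at hx
  have hmem := Walk.support_toPath_subset_support _ hx
  erw [Walk.support_map, List.mem_map] at hmem
  obtain ⟨y, -, rfl⟩ := hmem
  exact y.2

/-- Of two vertices on a walk, one is visited no later than the other. -/
theorem Walk.mem_support_takeUntil_or [DecidableEq W] {a b x y : W} (p : T.Walk a b)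
    (hx : x ∈ p.support) (hy : y ∈ p.support) :
    x ∈ (p.takeUntil y hy).support ∨ y ∈ (p.takeUntil x hx).support := by
  rcases List.prefix_or_prefix_of_prefix (p.support_takeUntil_prefix_support hx)
    (p.support_takeUntil_prefix_support hy) with h | h
  · exact .inl (h.subset (Walk.end_mem_support _))
  · exact .inr (h.subset (Walk.end_mem_support _))

theorem induce_singleton_connected (x : W) : (T.induce {x}).Connected :=
  Connected.of_subsingleton

theorem induce_univ_connected (hT : T.Connected) : (T.induce Set.univ).Connected :=
  (induceUnivIso T).connected_iff.2 hT

theorem isAcyclic_pathGraph (n : ℕ) : (pathGraph n).IsAcyclic := by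
  refine isAcyclic_iff_forall_adj_isBridge.2 fun u v huv ↦ ?_
  wlog h : u.val + 1 = v.val generalizing u v
  · rw [Sym2.eq_swap]
    exact this v u huv.symm ((pathGraph_adj.1 huv).resolve_left h)
  rw [isBridge_iff, reachable_iff_reflTransGen]
  intro hr
  have hle : ∀ w, Relation.ReflTransGen ((pathGraph n).deleteEdges {s(u, v)}).Adj u w →
      w ≤ u := by
    intro w hw
    induction hw with
    | refl => exact le_rfl
    | @tail x y _ hxy ih =>
      rw [deleteEdges_adj, pathGraph_adj] at hxy
      have hne : ¬ (x = u ∧ y = v) := by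
        rintro ⟨rfl, rfl⟩
        exact hxy.2 rfl
      simp only [Fin.ext_iff, Fin.le_def] at hne ih ⊢
      omega
  have := hle v hr
  rw [Fin.le_def] at this
  omega

/-- A path graph on at least two vertices has exactly two leaves. -/
theorem ncard_treeLeaves_pathGraph {n : ℕ} (hn : 2 ≤ n) :
    (treeLeaves (pathGraph n)).ncard = 2 := by
  have : treeLeaves (pathGraph n) = {⟨0, by omega⟩, ⟨n - 1, by omega⟩} := by
    ext i
    simp only [treeLeaves, Set.mem_ofPred_eq, Set.mem_insert_iff, Set.mem_singleton_iff,
      Set.ncard_eq_one, Set.ext_iff, mem_neighborSet, pathGraph_adj, Fin.ext_iff]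
    constructor
    · rintro ⟨a, ha⟩
      by_contra! h
      have h₁ := (ha ⟨i + 1, by omega⟩).1 (by simp)
      have h₂ := (ha ⟨i - 1, by omega⟩).1 (by simp; omega)
      simp at h₁ h₂
      omega
    · rintro (h | h)
      · exact ⟨⟨1, by omega⟩, fun x ↦ by simp; omega⟩
      · exact ⟨⟨n - 2, by omega⟩, fun x ↦ by simp; omega⟩
  rw [this, Set.ncard_pair (by simp; omega)]

/-- The leaves of a star on at least three vertices are the vertices other than its center. -/
theorem treeLeaves_starGraph {n : ℕ} (hn : 3 ≤ n) (c : Fin n) :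
    treeLeaves (starGraph c) = {c}ᶜ := by
  ext i
  simp only [treeLeaves, Set.mem_ofPred_eq, Set.mem_compl_iff, Set.mem_singleton_iff]
  constructor
  · rintro h rfl
    have : (starGraph i).neighborSet i = {i}ᶜ := by
      ext; simp [eq_comm]
    rw [this, Set.ncard_compl] at h
    simp at h
    omega
  · intro h
    refine Set.ncard_eq_one.2 ⟨c, ?_⟩
    ext x
    simp
    grind

end SimpleGraph

theorem fstar_FnRel {n : ℕ} (hn : 3 ≤ n) : fstar (FnRel n) = 2 := by
  refine IsLeast.csInf_eq ⟨?_, ?_⟩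
  · refine ⟨![fun u v ↦ u < v ∧ v.val < n - 1, fun u v ↦ v < u ∧ u.val < n - 1], ?_, ?_, ?_⟩
    · intro i u v
      fin_cases i
      · rcases le_total u v with h | h
        · exact .inr fun x hx ↦ ⟨h.trans_lt hx.1, hx.2⟩
        · exact .inl fun x hx ↦ ⟨h.trans_lt hx.1, hx.2⟩
      · by_cases hu : u.val < n - 1
        · by_cases hv : v.val < n - 1
          · rcases le_total u v with h | h
            · exact .inl fun x hx ↦ ⟨hx.1.trans_le h, hv⟩
            · exact .inr fun x hx ↦ ⟨hx.1.trans_le h, hu⟩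
          · exact .inr fun x hx ↦ absurd hx.2 hv
        · exact .inl fun x hx ↦ absurd hx.2 hu
    · intro i j hij u v
      fin_cases i <;> fin_cases j <;> simp at hij ⊢ <;> omega
    · intro u v
      simp only [FnRel, Fin.exists_fin_two, Fin.ext_iff, Fin.lt_def, Matrix.cons_val_zero,
        Matrix.cons_val_one]
      omega
  · rintro k ⟨F, hF, -, hE⟩
    let a : Fin n := ⟨0, by omega⟩
    let b : Fin n := ⟨1, by omega⟩
    obtain ⟨i, hi⟩ := (hE a b).1 (by simp [FnRel, a, b]; omega)
    obtain ⟨j, hj⟩ := (hE b a).1 (by simp [FnRel, a, b]; omega)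
    have hij : i ≠ j := by
      rintro rfl
      rcases hF i a b with h | h
      · exact (hE b b).2 ⟨i, h hi⟩ (.inl rfl)
      · exact (hE a a).2 ⟨i, h hj⟩ (.inl rfl)
    by_contra! hk
    exact hij (Fin.ext (by omega))

theorem digLeafage_FnRel {n : ℕ} (hn : 3 ≤ n) : digLeafage (FnRel n) = 2 := by
  refine IsLeast.csInf_eq ⟨?_, ?_⟩
  · have hconn : (SimpleGraph.pathGraph n).Connected := by
      obtain ⟨m, rfl⟩ : ∃ m, n = m + 1 := ⟨n - 1, by omega⟩
      exact SimpleGraph.pathGraph_connected m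
    let S : Fin n → Set (Fin n) := fun i ↦ if i.val = n - 1 then Set.univ else {i}
    have hS : ∀ i, ((SimpleGraph.pathGraph n).induce (S i)).Connected := by
      intro i
      by_cases hi : i.val = n - 1
      · rw [show S i = Set.univ from if_pos hi]
        exact SimpleGraph.induce_univ_connected hconn
      · rw [show S i = {i} from if_neg hi]
        exact SimpleGraph.induce_singleton_connected i
    refine ⟨Fin n, inferInstance, SimpleGraph.pathGraph n,
      ⟨hconn, SimpleGraph.isAcyclic_pathGraph n⟩, ⟨⟨S, S, hS, hS, fun u v ↦ ?_⟩⟩,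
      SimpleGraph.ncard_treeLeaves_pathGraph (by omega)⟩
    by_cases hu : u.val = n - 1 <;> by_cases hv : v.val = n - 1 <;> simp [FnRel, S, hu, hv]
    · exact ⟨u, trivial⟩
    · exact eq_comm
  · rintro k ⟨W, _, T, hT, ⟨R⟩, rfl⟩
    have : Nontrivial W := by
      by_contra hW
      rw [not_nontrivial_iff_subsingleton] at hW
      obtain ⟨⟨x, hx⟩⟩ := (R.src_connected ⟨0, by omega⟩).nonempty
      obtain ⟨⟨y, hy⟩⟩ := (R.snk_connected ⟨1, by omega⟩).nonempty
      have h := (R.rep ⟨0, by omega⟩ ⟨1, by omega⟩).2 ⟨x, hx, Subsingleton.elim y x ▸ hy⟩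
      simp [FnRel] at h
      omega
    exact hT.two_le_ncard_treeLeaves

theorem catchLeafage_FnRel {n : ℕ} (hn : 3 ≤ n) : catchLeafage (FnRel n) = n - 1 := by
  let c : Fin n := ⟨n - 1, by omega⟩
  have hrel : ∀ u v, FnRel n u v ↔ u = v ∨ u = c ∨ v = c := by
    simp [FnRel, c, Fin.ext_iff]
  refine IsLeast.csInf_eq ⟨?_, ?_⟩
  · have hconn := SimpleGraph.connected_starGraph c
    let S : Fin n → Set (Fin n) := fun i ↦ if i = c then Set.univ else {c, i}
    have hS : ∀ i, ((SimpleGraph.starGraph c).induce (S i)).Connected := by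
      intro i
      by_cases hi : i = c
      · rw [show S i = Set.univ from if_pos hi]
        exact SimpleGraph.induce_univ_connected hconn
      · rw [show S i = {c, i} from if_neg hi]
        exact SimpleGraph.induce_pair_connected_of_adj
          (SimpleGraph.starGraph_center_adj (Ne.symm hi))
    refine ⟨Fin n, inferInstance, SimpleGraph.starGraph c,
      ⟨S, fun v ↦ {v}, hS, SimpleGraph.induce_singleton_connected, fun u v ↦ ?_⟩,
      SimpleGraph.isTree_starGraph c, fun v ↦ ⟨v, rfl⟩, ?_⟩
    · rw [hrel, Set.inter_singleton_nonempty]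
      by_cases hu : u = c
      · simp [S, hu]
      · simp [S, hu, or_comm, eq_comm]
    · rw [SimpleGraph.treeLeaves_starGraph hn, Set.ncard_compl]
      simp
  · rintro k ⟨W, _, T, R, hT, hx, rfl⟩
    classical
    choose x hx using hx
    have hmem : ∀ u v, FnRel n u v ↔ x v ∈ R.src u := fun u v ↦ by
      rw [R.rep, hx, Set.inter_singleton_nonempty]
    have hxc : ∀ i, i ≠ c → x i ≠ x c := by
      intro i hi h
      obtain ⟨j, hj⟩ : ∃ j, j ∉ ({i, c} : Finset (Fin n)) := by
        by_contra! hall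
        have h₁ := Finset.card_le_card (fun j _ ↦ hall j : Finset.univ ⊆ {i, c})
        have h₂ := Finset.card_le_two (a := i) (b := c)
        simp at h₁
        omega
      simp only [Finset.mem_insert, Finset.mem_singleton, not_or] at hj
      have hjc : x c ∈ R.src j := (hmem j c).1 ((hrel _ _).2 (.inr (.inr rfl)))
      rw [← h, ← hmem, hrel] at hjc
      tauto
    have hpath : ∀ i j, j ≠ c → ∀ p : T.Walk (x c) (x i), p.IsPath → x j ∈ p.support → i ≠ c →
        i = j := by
      intro i j hj p hp hjp hi
      have hji := hT.isAcyclic.support_subset_of_induce_connected_s17 (R.src_connected i)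
        ((hmem i c).1 ((hrel _ _).2 (.inr (.inr rfl)))) ((hmem i i).1 (.inl rfl)) hp _ hjp
      rw [← hmem, hrel] at hji
      tauto
    choose! l p hp hxp hl using fun (i : {i : Fin n // i ≠ c}) ↦
      hT.exists_path_to_leaf (hxc i i.2)
    have hinj : Function.Injective l := by
      intro i j hij
      have hjp : x j ∈ (p i).support := by
        have heq : (p i).copy rfl hij = p j := congrArg Subtype.val
          ((hT.isAcyclic.subsingleton_path _ _).elim ⟨(p i).copy rfl hij, by simpa using hp i⟩
            ⟨p j, hp j⟩)
        have := hxp j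
        rwa [← heq, SimpleGraph.Walk.support_copy] at this
      apply Subtype.ext
      rcases (p i).mem_support_takeUntil_or (hxp i) hjp with h | h
      · exact (hpath j i i.2 _ ((hp i).takeUntil _) h j.2).symm
      · exact hpath i j j.2 _ ((hp i).takeUntil _) h i.2
    have hcard : Nat.card {i : Fin n // i ≠ c} = n - 1 := by simp
    rw [← hcard, ← Nat.card_range_of_injective hinj, Nat.card_coe_set_eq]
    exact Set.ncard_le_ncard (by rintro _ ⟨i, rfl⟩; exact hl i) (Set.toFinite _)

/-- For `n ≥ 3`, the digraph `F_n` with adjacency matrix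
`[[I, Y], [Yᵀ, 1]]` satisfies `f*(F_n) = l(F_n) = 2` but `l*(F_n) = n - 1`. -/
theorem stmt_17 (n : ℕ) (hn : 3 ≤ n) :
    fstar (FnRel n) = 2 ∧ digLeafage (FnRel n) = 2 ∧
    catchLeafage (FnRel n) = n - 1 :=
  ⟨fstar_FnRel hn, digLeafage_FnRel hn, catchLeafage_FnRel hn⟩
end

section
/- For n ≥ 3, let P_n be the digraph on vertices {1, …, n} consisting of the directed path 1→2→⋯→n together with a loop at each vertex, i.e., (i,j) ∈ E(P_n) iff j = i or j = i + 1. Then the catch leafage satisfies l*(P_n) = 2, while w(P(P_n)) = n − 1; hence w(P(D)) is not bounded by any function of l*(D). -/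
/-- A nontrivial finite tree has at least two leaves. -/
lemma two_le_ncard_treeLeaves {W : Type} [Finite W] [Nontrivial W] {T : SimpleGraph W}
    (hT : T.IsTree) : 2 ≤ (treeLeaves T).ncard := by
  classical
  have := Fintype.ofFinite W
  obtain ⟨u, v, huv, hu, hv⟩ := hT.exists_ne_and_degree_eq_one
  have leaf_of_degree {w : W} (hw : T.degree w = 1) : w ∈ treeLeaves T := by
    rw [treeLeaves, Set.mem_ofPred_eq, ← hw, ← T.card_neighborSet_eq_degree,
      Set.ncard_eq_toFinset_card', Set.toFinset_card]
  rw [← Set.ncard_pair huv]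
  exact Set.ncard_le_ncard (Set.pair_subset (leaf_of_degree hu) (leaf_of_degree hv))
    (Set.toFinite _)

/-- A path graph is a tree. -/
lemma pathGraph_isTree (m : ℕ) : (SimpleGraph.pathGraph (m + 1)).IsTree := by
  have hconn := SimpleGraph.pathGraph_connected m
  have hsub : (SimpleGraph.pathGraph (m + 1)).edgeSet ⊆
      Set.range fun i : Fin m => s(i.castSucc, i.succ) := by
    rintro ⟨a, b⟩ hab
    change (SimpleGraph.pathGraph (m + 1)).Adj a b at hab
    rw [SimpleGraph.pathGraph_adj] at hab
    rcases hab with hab | hab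
    · exact ⟨⟨a, by lia⟩, by simp [hab]⟩
    · exact ⟨⟨b, by lia⟩, by simp [Fin.ext_iff, hab]⟩
  have hle : Nat.card (SimpleGraph.pathGraph (m + 1)).edgeSet ≤ m := by
    rw [Nat.card_coe_set_eq]
    refine (Set.ncard_le_ncard hsub (Set.toFinite _)).trans ?_
    rw [← Nat.card_coe_set_eq]
    simpa using Finite.card_range_le fun i : Fin m => s(i.castSucc, i.succ)
  have hge := hconn.card_vert_le_card_edgeSet_add_one
  rw [SimpleGraph.isTree_iff_connected_and_card]
  rw [Nat.card_fin] at hge ⊢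
  exact ⟨hconn, by lia⟩

/-- Only the two endpoints of a path graph can be leaves. -/
lemma treeLeaves_pathGraph_subset (m : ℕ) :
    treeLeaves (SimpleGraph.pathGraph (m + 1)) ⊆ {0, Fin.last m} := by
  intro w hw
  by_contra hne
  simp only [Set.mem_insert_iff, Set.mem_singleton_iff, not_or, Fin.ext_iff, Fin.val_zero,
    Fin.val_last] at hne
  obtain ⟨a, ha⟩ := Set.ncard_eq_one.mp hw
  have eq_of_adj {x : Fin (m + 1)} (hx : w.val + 1 = x.val ∨ x.val + 1 = w.val) : x = a := by
    rw [← SimpleGraph.pathGraph_adj, ← SimpleGraph.mem_neighborSet, ha] at hx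
    exact hx
  have hpred : (⟨w - 1, by lia⟩ : Fin (m + 1)) = a := eq_of_adj (Or.inr (by grind))
  have hsucc : (⟨w + 1, by lia⟩ : Fin (m + 1)) = a := eq_of_adj (Or.inl rfl)
  have := hpred.trans hsucc.symm
  simp only [Fin.mk.injEq] at this
  lia

/-- The representation of `P_n` in the path on `n` vertices: the source set of `i` consists
of `i` and its successor, and the sink set of `j` is `{j}`. -/
def pathCatchRep (n : ℕ) : SubtreeRep (PnRel n) (SimpleGraph.pathGraph n) where
  src i := {j | PnRel n i j}
  snk j := {j}
  src_connected i := by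
    rw [SimpleGraph.connected_iff_exists_forall_reachable]
    refine ⟨⟨i, Or.inl rfl⟩, ?_⟩
    rintro ⟨j, rfl | hj⟩
    · rfl
    · refine SimpleGraph.Adj.reachable ?_
      rw [SimpleGraph.comap_adj, SimpleGraph.pathGraph_adj]
      exact Or.inl hj.symm
  snk_connected j := by
    rw [SimpleGraph.connected_iff_exists_forall_reachable]
    exact ⟨⟨j, rfl⟩, fun x => by rw [Subsingleton.elim x ⟨j, rfl⟩]⟩
  rep u v := by simp

/-- The catch leafage of `P_n` is two. -/
lemma catchLeafage_PnRel (n : ℕ) (hn : 3 ≤ n) : catchLeafage (PnRel n) = 2 := by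
  obtain ⟨m, rfl⟩ : ∃ m, n = m + 1 := ⟨n - 1, by lia⟩
  have hmem : (treeLeaves (SimpleGraph.pathGraph (m + 1))).ncard ∈
      {k | ∃ (W : Type) (_ : Fintype W) (T : SimpleGraph W) (R : SubtreeRep (PnRel (m + 1)) T),
        T.IsTree ∧ (∀ v, ∃ x, R.snk v = {x}) ∧ (treeLeaves T).ncard = k} :=
    ⟨_, inferInstance, _, pathCatchRep (m + 1), pathGraph_isTree m, fun v => ⟨v, rfl⟩, rfl⟩
  refine le_antisymm ((Nat.sInf_le hmem).trans ?_) (le_csInf ⟨_, hmem⟩ ?_)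
  · exact (Set.ncard_le_ncard (treeLeaves_pathGraph_subset m) (Set.toFinite _)).trans
      ((Set.ncard_insert_le _ _).trans (by simp))
  · rintro k ⟨W, _, T, R, hT, hsnk, rfl⟩
    have : Nontrivial W := by
      by_contra htriv
      rw [not_nontrivial_iff_subsingleton] at htriv
      obtain ⟨x, hx⟩ := hsnk ⟨2, by lia⟩
      obtain ⟨y⟩ := (R.src_connected 0).nonempty
      have hedge : PnRel (m + 1) 0 ⟨2, by lia⟩ :=
        (R.rep _ _).mpr ⟨y, y.2, by rw [hx]; exact Subsingleton.elim _ _⟩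
      simp [PnRel, Fin.ext_iff] at hedge
    exact two_le_ncard_treeLeaves hT

/-- The width of the incidence poset of `P_n` is `n - 1`. -/
lemma incWidth_PnRel (n : ℕ) (hn : 2 ≤ n) : incWidth (PnRel n) = n - 1 := by
  classical
  obtain ⟨m, rfl⟩ : ∃ m, n = m + 1 := ⟨n - 1, by lia⟩
  have index_eq {i j : Fin m}
      (h : {u | PnRel (m + 1) u i.succ} ⊆ {u | PnRel (m + 1) u j.succ}) : i = j := by
    have hself : PnRel (m + 1) i.succ j.succ := h (Or.inl rfl)
    have hpred : PnRel (m + 1) i.castSucc j.succ := h (Or.inr (by simp))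
    simp only [PnRel, Fin.ext_iff, Fin.val_succ, Fin.val_castSucc] at hself hpred
    grind
  refine IsGreatest.csSup_eq ⟨?_, ?_⟩
  · refine ⟨Finset.univ.image fun i : Fin m => {u | PnRel (m + 1) u i.succ}, ?_, ?_, ?_⟩
    · intro s hs
      simp only [Finset.coe_image, Finset.coe_univ, Set.image_univ, Set.mem_range] at hs
      obtain ⟨i, rfl⟩ := hs
      exact ⟨i.succ, rfl⟩
    · intro s hs t ht hne hle
      simp only [Finset.coe_image, Finset.coe_univ, Set.image_univ, Set.mem_range] at hs ht
      obtain ⟨i, rfl⟩ := hs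
      obtain ⟨j, rfl⟩ := ht
      exact hne (by rw [index_eq hle])
    · rw [Finset.card_image_of_injective _ fun i j h => index_eq (Eq.subset h)]
      simp
  · rintro k ⟨A, hA, hanti, rfl⟩
    by_contra! hcard
    set N : Fin (m + 1) → Set (Fin (m + 1)) := fun v => {u | PnRel (m + 1) u v}
    have hsub : A ⊆ Finset.univ.image N := by
      intro s hs
      simpa using hA hs
    have heq : A = Finset.univ.image N :=
      Finset.eq_of_subset_of_card_le hsub
        (Finset.card_image_le.trans (by rw [Finset.card_univ, Fintype.card_fin]; lia))
    have hmem (v : Fin (m + 1)) : N v ∈ (A : Set (Set (Fin (m + 1)))) := by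
      rw [heq]
      simp
    have hlt : 1 < m + 1 := by lia
    refine hanti (hmem 0) (hmem ⟨1, hlt⟩) (fun h => ?_) ?_
    · have : (⟨1, hlt⟩ : Fin (m + 1)) ∈ N 0 := by
        rw [h]
        exact Or.inl rfl
      rcases this with h | h <;> simp [Fin.ext_iff] at h
    · rintro u (hu | hu)
      · subst hu
        exact Or.inr (by simp)
      · simp at hu

/-- For `n ≥ 3`, the directed path with loops `P_n` satisfies
`l*(P_n) = 2` while `w(P(P_n)) = n - 1`; hence `w(P(D))` is not bounded by any
function of `l*(D)`. -/
theorem stmt_18 (n : ℕ) (hn : 3 ≤ n) :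
    catchLeafage (PnRel n) = 2 ∧ incWidth (PnRel n) = n - 1 ∧
    ∀ g : ℕ → ℕ, ∃ (V : Type) (_ : Fintype V) (E : V → V → Prop),
      g (catchLeafage E) < incWidth E := by
  refine ⟨catchLeafage_PnRel n hn, incWidth_PnRel n (by lia), fun g => ?_⟩
  refine ⟨Fin (g 2 + 3), inferInstance, PnRel (g 2 + 3), ?_⟩
  rw [catchLeafage_PnRel _ (by lia), incWidth_PnRel _ (by lia)]
  lia
end
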